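/- Let m and d be integers with 0 ≤ m ≤ d−1, let p be a prime, and for each 0 ≤ ℓ ≤ m let r_ℓ = p^{e_ℓ} be a power of p with integer e_ℓ ≥ 0. Set N_ℓ = (r_ℓ−1)(d+1−m). Assume that p(d−m) is even, or m = 0. Then for every collection of continuous maps f_0: Δ_{N_0} → ℝ^d, …, f_m: Δ_{N_m} → ℝ^d there exist an m-dimensional affine subspace L of ℝ^d and, for each 0 ≤ ℓ ≤ m, r_ℓ pairwise disjoint faces σ_1^ℓ, …, σ_{r_ℓ}^ℓ of Δ_{N_ℓ} such that f_ℓ(σ_j^ℓ) ∩ L ≠ ∅ for all 1 ≤ j ≤ r_ℓ. (The topological transversal Tverberg theorem for prime powers; the case c_0 = ⋯ = c_m = 0 of the constraint topological transversal Tverberg theorem.) -/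

import Mathlib

/-!
A configuration consists, for each `ℓ`, of a point of the `(N ℓ + 1)`-fold join of the discrete
group `(ZMod p) ^ e ℓ`, and of `h` points of joins of `ZMod p`. Here `q = 1` if `p = 2`, `q = 2` if
`p` is odd, and `d - m = q * h`. A point of the first kind is the same as `p ^ e ℓ` weights, indexed
by the group elements `g`, on disjoint sets of vertices of the simplex; extending `f ℓ`
homogeneously, each `g` has an image point and a total weight. A point of the second kind gives a
nonzero frame vector `u a`, real for `p = 2` and complex for `p` odd, which is read as an affine
equation on `ℝ^d`. The group `G`, the product of all `(ZMod p) ^ e ℓ` and of `h` copies of `ZMod p`,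
acts freely on the product of the joins (`PP`).

The test maps (`phi`) are: the hermitian products of different frame vectors; for `p` odd also all
bilinear products; the Fourier coefficients of the total weights, over one of each pair of conjugate
nontrivial characters; and the Fourier coefficients of `g ↦ ⟨u a, (image point of g, weight of g)⟩`.
Each test map is multiplied by a character of `G` when `G` acts. At a common zero all weights are
`(p ^ e ℓ)⁻¹`, all image points satisfy the equations `u a`, and these equations are independent, so
that they define an `m`-dimensional flat (`exists_zero`, `frame_surj_complex`, `frame_surj_real`,
`exists_flat`, `core`).

The common zero exists by a Borsuk–Ulam theorem (`borsuk_ulam`, `borsuk_ulam_joins`). In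
cohomological terms, the product of the Euler classes of the characters is a product of linear forms
in the polynomial part of `H*(BG; ZMod p)`, and it must survive in the product of joins. The
argument below makes this explicit with chains of affine simplices. If there is no common zero, then
at every point some test map is nonzero. The sector that contains the value of a test map is an
equivariant label in `ZMod p`, and where the map vanishes an arbitrary equivariant label is used.
The cup product `ω` of the carry classes of these labels (of their coboundaries for `p = 2`) is an
invariant cocycle that vanishes on small simplices, because near a point one of the labels takes at
most two adjacent values (one value for `p = 2`). On the other hand, `ω` is evaluated on an explicit
chain `zc`, built from the periodic resolutions of the cyclic factors by shuffles, which is a cycle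
modulo the action; the value is a coefficient `cf` of the product of the linear forms (`omTwo_eval`,
`omOne_eval`). The coefficient of the product of the leading terms is nonzero (`cf_ne_zero`), and
the joins are just long enough to contain the corresponding chain (`count_le`). As barycentric
subdivision does not change the value of an invariant cocycle on `zc`, the value is also nonzero on
some arbitrarily small simplex (`exists_small`), a contradiction.

If `p` and `d - m` are odd, then `m = 0`, and the theorem follows from the case of dimension `d + 1`
(`reduce`).
-/

open scoped BigOperators

noncomputable section

/-- The standard `N`-dimensional simplex, realized in Euclidean space `ℝ^{N+1}`. -/
def stdSimp (N : ℕ) : Set (EuclideanSpace ℝ (Fin (N + 1))) :=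
  {x | (∀ i, 0 ≤ x i) ∧ ∑ i, x i = 1}

/-- The face of the standard simplex spanned by the vertex set `S`. -/
def simpFace (N : ℕ) (S : Finset (Fin (N + 1))) : Set (EuclideanSpace ℝ (Fin (N + 1))) :=
  {x ∈ stdSimp N | ∀ i, x i ≠ 0 → i ∈ S}

namespace TTverberg
set_option linter.unusedSectionVars false
set_option linter.unusedVariables false

/-! ### Affine chains and subdivision -/

section Chains
variable {R : Type*} [CommRing R] {E : Type*}

variable (R E) in
/-- Finite `R`-linear combinations of finite sequences of points of `E`. A sequence of length
`n + 1` plays the role of an affine `n`-simplex; the empty sequence is the augmentation. -/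
abbrev Ch := List E →₀ R

/-- The cone with apex `x`: prepend `x` to every sequence. -/
def cone (x : E) : Ch R E →ₗ[R] Ch R E := Finsupp.lmapDomain R R (List.cons x)

@[simp] lemma cone_single (x : E) (l : List E) (r : R) :
    cone x (Finsupp.single l r) = Finsupp.single (x :: l) r := by
  simp [cone, Finsupp.lmapDomain_apply, Finsupp.mapDomain_single]

variable (R) in
/-- The (augmented) simplicial boundary of one sequence, by recursion on the sequence. -/
def bdL : List E → Ch R E
  | [] => 0
  | x :: l => Finsupp.single l 1 - cone x (bdL l)

variable (R E) in
/-- The augmented simplicial boundary operator. -/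
def bd : Ch R E →ₗ[R] Ch R E := Finsupp.linearCombination R (bdL R)

@[simp] lemma bd_single (l : List E) : bd R E (Finsupp.single l 1) = bdL R l := by
  simp [bd]

lemma bd_cone (x : E) (c : Ch R E) : bd R E (cone x c) = c - cone x (bd R E c) := by
  have : (bd R E) ∘ₗ (cone x) = LinearMap.id - (cone x) ∘ₗ (bd R E) := by
    ext l : 2
    simp [bdL]
  simpa using LinearMap.congr_fun this c

lemma bd_bdL (l : List E) : bd R E (bdL R l) = 0 := by
  induction l with
  | nil => simp [bdL]
  | cons x l ih => simp [bdL, bd_cone, ih]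

lemma bd_bd (c : Ch R E) : bd R E (bd R E c) = 0 := by
  have : (bd R E) ∘ₗ (bd R E) = 0 := by
    ext l : 2
    simp [bd_bdL]
  simpa using LinearMap.congr_fun this c

/-- Chains supported on sequences with a given property. -/
abbrev Sup (R : Type*) [CommRing R] {E : Type*} (Q : List E → Prop) : Submodule R (Ch R E) :=
  Finsupp.supported R R {l | Q l}

lemma Sup.mono {Q Q' : List E → Prop} (h : ∀ l, Q l → Q' l) {c : Ch R E} (hc : c ∈ Sup R Q) :
    c ∈ Sup R Q' := Finsupp.supported_mono (R := R) (M := R) (s := {l | Q l}) (t := {l | Q' l}) h hc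

lemma single_mem_Sup {Q : List E → Prop} {l : List E} (h : Q l) :
    (Finsupp.single l 1 : Ch R E) ∈ Sup R Q := Finsupp.single_mem_supported R 1 h

/-- A linear map sends chains supported on `Q` into a submodule as soon as it does so for single
sequences satisfying `Q`. -/
lemma map_mem_of_Sup {M : Type*} [AddCommGroup M] [Module R M] (F : Ch R E →ₗ[R] M)
    {Q : List E → Prop} (S : Submodule R M)
    (h : ∀ l, Q l → F (Finsupp.single l 1) ∈ S) {c : Ch R E} (hc : c ∈ Sup R Q) : F c ∈ S := by
  rw [Sup, Finsupp.supported_eq_span_single] at hc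
  refine Submodule.span_induction (p := fun c _ => F c ∈ S) ?_ ?_ ?_ ?_ hc
  · rintro _ ⟨l, hl, rfl⟩
    exact h l hl
  · simp
  · intro x y _ _ hx hy
    rw [map_add]
    exact S.add_mem hx hy
  · intro r x _ hx
    rw [map_smul]
    exact S.smul_mem r hx

lemma eq_of_Sup {M : Type*} [AddCommGroup M] [Module R M] (F F' : Ch R E →ₗ[R] M)
    {Q : List E → Prop} (h : ∀ l, Q l → F (Finsupp.single l 1) = F' (Finsupp.single l 1))
    {c : Ch R E} (hc : c ∈ Sup R Q) : F c = F' c := by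
  have := map_mem_of_Sup (F - F') (⊥ : Submodule R M) (Q := Q)
    (fun l hl => by simp [h l hl]) hc
  rw [Submodule.mem_bot, LinearMap.sub_apply, sub_eq_zero] at this
  exact this

lemma cone_mem_Sup {Q Q' : List E → Prop} (x : E) (h : ∀ l, Q l → Q' (x :: l)) {c : Ch R E}
    (hc : c ∈ Sup R Q) : cone x c ∈ Sup R Q' :=
  map_mem_of_Sup (cone x) (Sup R Q')
    (fun l hl => by rw [cone_single]; exact single_mem_Sup (h l hl)) hc

lemma bdL_mem_Sup (l : List E) :
    bdL R l ∈ Sup R (fun l' : List E => l'.length + 1 = l.length ∧ l' ⊆ l) := by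
  induction l with
  | nil => exact Submodule.zero_mem _
  | cons x l ih =>
    refine Submodule.sub_mem _ (single_mem_Sup (by simp)) (cone_mem_Sup x ?_ ih)
    rintro l' ⟨h1, h2⟩
    refine ⟨by simp [h1], ?_⟩
    exact List.cons_subset_cons x h2

/-- The map on chains induced by a map of points. -/
def mapCh (F : E → E) : Ch R E →ₗ[R] Ch R E := Finsupp.lmapDomain R R (List.map F)

@[simp] lemma mapCh_single (F : E → E) (l : List E) (r : R) :
    mapCh F (Finsupp.single l r) = Finsupp.single (l.map F) r := by
  simp [mapCh, Finsupp.lmapDomain_apply, Finsupp.mapDomain_single]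

lemma mapCh_cone (F : E → E) (x : E) (c : Ch R E) :
    mapCh F (cone x c) = cone (F x) (mapCh F c) := by
  have : (mapCh F) ∘ₗ (cone x) = (cone (F x)) ∘ₗ (mapCh (R := R) F) := by
    ext l : 2
    simp
  simpa using LinearMap.congr_fun this c

lemma bdL_map (F : E → E) (l : List E) : bdL R (l.map F) = mapCh F (bdL R l) := by
  induction l with
  | nil => simp [bdL]
  | cons x l ih => simp [bdL, ih, mapCh_cone]

end Chains

section Subdivision
variable {R : Type*} [CommRing R] {E : Type*} [NormedAddCommGroup E] [NormedSpace ℝ E]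

/-- The barycentre of a sequence of points. -/
def bary (l : List E) : E := (l.length : ℝ)⁻¹ • l.sum

lemma bary_map (A : E →ₗ[ℝ] E) (l : List E) : bary (l.map A) = A (bary l) := by
  simp [bary, map_list_sum]

variable (R E) in
/-- Barycentric subdivision, truncated after `n` levels of recursion: on sequences of length at most
`n` it is the usual barycentric subdivision. -/
def sd : ℕ → (Ch R E →ₗ[R] Ch R E)
  | 0 => LinearMap.id
  | n + 1 => Finsupp.linearCombination R fun l =>
      if l = [] then Finsupp.single [] 1 else cone (bary l) (sd n (bdL R l))

variable (R E) in
/-- The chain homotopy between the identity and `sd`. -/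
def ht : ℕ → (Ch R E →ₗ[R] Ch R E)
  | 0 => 0
  | n + 1 => Finsupp.linearCombination R fun l =>
      cone (bary l) (Finsupp.single l 1 - sd R E (n + 1) (Finsupp.single l 1) - ht n (bdL R l))

lemma sd_succ_single (n : ℕ) {l : List E} (hl : l ≠ []) :
    sd R E (n + 1) (Finsupp.single l 1) = cone (bary l) (sd R E n (bdL R l)) := by
  simp [sd, hl]

lemma sd_succ_nil (n : ℕ) :
    sd R E (n + 1) (Finsupp.single [] 1) = Finsupp.single [] 1 := by
  simp [sd]

lemma ht_succ_single (n : ℕ) (l : List E) :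
    ht R E (n + 1) (Finsupp.single l 1) =
      cone (bary l) (Finsupp.single l 1 - sd R E (n + 1) (Finsupp.single l 1)
        - ht R E n (bdL R l)) := by
  simp [ht]

lemma bd_sd (n : ℕ) (c : Ch R E) : bd R E (sd R E (n + 1) c) = sd R E n (bd R E c) := by
  induction n generalizing c with
  | zero =>
    have : (bd R E) ∘ₗ (sd R E 1) = (sd R E 0) ∘ₗ (bd R E) := by
      ext l : 2
      by_cases hl : l = []
      · subst hl; simp [bdL, sd]
      · simp [hl, bd_cone, sd, bd_bdL]
    exact LinearMap.congr_fun this c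
  | succ n ih =>
    have : (bd R E) ∘ₗ (sd R E (n + 1 + 1)) = (sd R E (n + 1)) ∘ₗ (bd R E) := by
      ext l : 2
      by_cases hl : l = []
      · subst hl; simp [sd_succ_nil, bdL]
      · simp [sd_succ_single, hl, bd_cone, ih, bd_bdL]
    exact LinearMap.congr_fun this c

lemma bd_ht (n : ℕ) (c : Ch R E) :
    bd R E (ht R E (n + 1) c) = c - sd R E (n + 1) c - ht R E n (bd R E c) := by
  have key : ∀ n, (∀ l : List E, bd R E (ht R E n (bdL R l)) = bdL R l - sd R E n (bdL R l)) →
      ∀ c, bd R E (ht R E (n + 1) c) = c - sd R E (n + 1) c - ht R E n (bd R E c) := by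
    intro n hn c
    have : (bd R E) ∘ₗ (ht R E (n + 1)) =
        LinearMap.id - sd R E (n + 1) - (ht R E n) ∘ₗ (bd R E) := by
      ext l : 2
      simp [ht_succ_single, bd_cone, bd_sd, hn, bdL]
      abel
    simpa using LinearMap.congr_fun this c
  induction n generalizing c with
  | zero => exact key 0 (fun l => by simp [ht, sd]) c
  | succ n ih => exact key (n + 1) (fun l => by simp [ih, bd_bdL]) c

lemma sd_map (A : E →ₗ[ℝ] E) (n : ℕ) (c : Ch R E) :
    sd R E n (mapCh A c) = mapCh A (sd R E n c) := by
  induction n generalizing c with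
  | zero => simp [sd]
  | succ n ih =>
    have : (sd R E (n + 1)) ∘ₗ (mapCh A) = (mapCh A) ∘ₗ (sd R E (n + 1)) := by
      ext l : 2
      by_cases hl : l = []
      · subst hl; simp [sd_succ_nil]
      · simp [sd_succ_single, hl, bdL_map, ih, mapCh_cone, bary_map]
    exact LinearMap.congr_fun this c

lemma ht_map (A : E →ₗ[ℝ] E) (n : ℕ) (c : Ch R E) :
    ht R E n (mapCh A c) = mapCh A (ht R E n c) := by
  induction n generalizing c with
  | zero => simp [ht]
  | succ n ih =>
    have : (ht R E (n + 1)) ∘ₗ (mapCh A) = (mapCh A) ∘ₗ (ht R E (n + 1)) := by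
      ext l : 2
      have := sd_map (R := R) A (n + 1) (Finsupp.single l 1)
      rw [mapCh_single] at this
      simp only [LinearMap.coe_comp, Function.comp_apply, Finsupp.lsingle_apply, mapCh_single,
        ht_succ_single, bdL_map, ih, mapCh_cone, bary_map, map_sub, this]
    exact LinearMap.congr_fun this c

/-- The convex hull of the points of a sequence. -/
def hull (l : List E) : Set E := convexHull ℝ {x | x ∈ l}

lemma subset_hull {l : List E} {x : E} (hx : x ∈ l) : x ∈ hull l :=
  subset_convexHull ℝ _ hx

lemma hull_subset {l : List E} {S : Set E} (hS : Convex ℝ S) (h : ∀ x ∈ l, x ∈ S) : hull l ⊆ S :=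
  convexHull_min h hS

lemma hull_mono {l l' : List E} (h : l' ⊆ l) : hull l' ⊆ hull l :=
  convexHull_mono fun _ hx => h hx

lemma bary_mem_hull {l : List E} (hl : l ≠ []) : bary l ∈ hull l := by
  have hpos : (0 : ℝ) < l.length := by
    exact_mod_cast List.length_pos_iff.2 hl
  have : bary l = ∑ i : Fin l.length, (l.length : ℝ)⁻¹ • l.get i := by
    rw [bary, ← Finset.smul_sum, ← List.sum_ofFn, List.ofFn_get]
  rw [this]
  refine (convex_convexHull ℝ _).sum_mem (fun _ _ => by positivity) ?_ ?_
  · simp [hpos.ne']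
  · intro i _
    exact subset_hull (List.get_mem l i)

lemma sd_mem_hull (n : ℕ) (l : List E) :
    sd R E n (Finsupp.single l 1) ∈ Sup R (fun l' : List E => ∀ x ∈ l', x ∈ hull l) := by
  induction n generalizing l with
  | zero => exact single_mem_Sup fun x hx => subset_hull hx
  | succ n ih =>
    by_cases hl : l = []
    · subst hl
      rw [sd_succ_nil]
      exact single_mem_Sup (by simp)
    · rw [sd_succ_single n hl]
      refine cone_mem_Sup (Q := fun l' => ∀ x ∈ l', x ∈ hull l) _ ?_ ?_
      · intro l' h x hx
        rcases List.mem_cons.1 hx with rfl | hx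
        exacts [bary_mem_hull hl, h x hx]
      · refine map_mem_of_Sup _ _ ?_ (bdL_mem_Sup l)
        rintro l' ⟨-, h⟩
        exact Sup.mono (fun l'' h'' x hx => hull_mono h (h'' x hx)) (ih l')

lemma ht_mem_hull (n : ℕ) (l : List E) :
    ht R E n (Finsupp.single l 1) ∈ Sup R (fun l' : List E => ∀ x ∈ l', x ∈ hull l) := by
  induction n generalizing l with
  | zero => exact Submodule.zero_mem _
  | succ n ih =>
    by_cases hl : l = []
    · subst hl
      simp [ht_succ_single, sd_succ_nil, bdL]
    · rw [ht_succ_single n]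
      refine cone_mem_Sup (Q := fun l' => ∀ x ∈ l', x ∈ hull l) _ ?_ ?_
      · intro l' h x hx
        rcases List.mem_cons.1 hx with rfl | hx
        exacts [bary_mem_hull hl, h x hx]
      · refine Submodule.sub_mem _ (Submodule.sub_mem _
          (single_mem_Sup fun x hx => subset_hull hx) (sd_mem_hull _ _)) ?_
        refine map_mem_of_Sup _ _ ?_ (bdL_mem_Sup l)
        rintro l' ⟨-, h⟩
        exact Sup.mono (fun l'' h'' x hx => hull_mono h (h'' x hx)) (ih l')

lemma dist_bary_le {N : ℕ} {l : List E} (hN : l.length ≤ N) {c : ℝ}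
    (hc : ∀ x ∈ l, ∀ y ∈ l, dist x y ≤ c) {y : E} (hy : y ∈ hull l) :
    dist y (bary l) ≤ (1 - (N : ℝ)⁻¹) * c := by
  by_cases hl : l = []
  · subst hl; simp [hull] at hy
  have hpos : 0 < l.length := List.length_pos_iff.2 hl
  have hposR : (0 : ℝ) < l.length := by exact_mod_cast hpos
  have hNR : (l.length : ℝ) ≤ N := by exact_mod_cast hN
  have hb : bary l = ∑ i : Fin l.length, (l.length : ℝ)⁻¹ • l.get i := by
    rw [bary, ← Finset.smul_sum, ← List.sum_ofFn, List.ofFn_get]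
  have hc0 : 0 ≤ c := by
    obtain ⟨x, hx⟩ := List.exists_mem_of_ne_nil l hl
    simpa using hc x hx x hx
  refine hull_subset (convex_closedBall (bary l) ((1 - (N : ℝ)⁻¹) * c)) ?_ hy
  intro x hx
  obtain ⟨j, rfl⟩ := List.get_of_mem hx
  rw [Metric.mem_closedBall]
  have h1 : l.get j - bary l = ∑ i : Fin l.length, (l.length : ℝ)⁻¹ • (l.get j - l.get i) := by
    simp only [smul_sub, Finset.sum_sub_distrib, hb]
    congr 1
    simp only [Finset.sum_const, Finset.card_univ, Fintype.card_fin]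
    rw [← Nat.cast_smul_eq_nsmul ℝ, smul_smul, mul_inv_cancel₀ hposR.ne', one_smul]
  rw [dist_eq_norm, h1, ← Finset.add_sum_erase _ _ (Finset.mem_univ j)]
  simp only [sub_self, smul_zero, zero_add]
  calc ‖∑ i ∈ Finset.univ.erase j, (l.length : ℝ)⁻¹ • (l.get j - l.get i)‖
      ≤ ∑ i ∈ Finset.univ.erase j, (l.length : ℝ)⁻¹ * c := by
        refine norm_sum_le_of_le _ fun i _ => ?_
        rw [norm_smul, Real.norm_of_nonneg (by positivity)]
        have := hc _ (List.get_mem l j) _ (List.get_mem l i)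
        rw [dist_eq_norm] at this
        gcongr
    _ = (1 - (l.length : ℝ)⁻¹) * c := by
        rw [Finset.sum_const, Finset.card_erase_of_mem (Finset.mem_univ j), Finset.card_univ,
          Fintype.card_fin, nsmul_eq_mul, Nat.cast_sub hpos]
        field_simp
        push_cast
        ring
    _ ≤ _ := by gcongr

/-- Subdivision shrinks the diameter of simplices by the factor `1 - 1/N`. -/
lemma sd_small {N : ℕ} (n : ℕ) (hn : n ≤ N) (l : List E) (hl : l.length ≤ n) {c : ℝ}
    (hc : ∀ x ∈ l, ∀ y ∈ l, dist x y ≤ c) (hc0 : 0 ≤ c) :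
    sd R E n (Finsupp.single l 1) ∈ Sup R (fun l' : List E => l'.length ≤ n ∧
      (∀ x ∈ l', x ∈ hull l) ∧ ∀ x ∈ l', ∀ y ∈ l', dist x y ≤ (1 - (N : ℝ)⁻¹) * c) := by
  induction n generalizing l with
  | zero =>
    have : l = [] := List.length_eq_zero_iff.1 (by omega)
    subst this
    exact single_mem_Sup (by simp)
  | succ n ih =>
    by_cases hl' : l = []
    · subst hl'
      rw [sd_succ_nil]
      exact single_mem_Sup (by simp)
    · rw [sd_succ_single n hl']
      refine cone_mem_Sup (Q := fun l' => l'.length ≤ n ∧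
        (∀ x ∈ l', x ∈ hull l) ∧ ∀ x ∈ l', ∀ y ∈ l', dist x y ≤ (1 - (N : ℝ)⁻¹) * c) _ ?_ ?_
      · rintro l' ⟨h1, h2, h3⟩
        refine ⟨by simpa using h1, ?_, ?_⟩
        · intro x hx
          rcases List.mem_cons.1 hx with rfl | hx
          exacts [bary_mem_hull hl', h2 x hx]
        · have hb : ∀ x ∈ l', dist x (bary l) ≤ (1 - (N : ℝ)⁻¹) * c := fun x hx =>
            dist_bary_le (hl.trans hn) hc (h2 x hx)
          intro x hx y hy
          rcases List.mem_cons.1 hx with rfl | hx <;> rcases List.mem_cons.1 hy with rfl | hy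
          · rw [dist_self]
            have : (1 : ℝ) ≤ N := by exact_mod_cast (by omega : 1 ≤ N)
            have : (N : ℝ)⁻¹ ≤ 1 := inv_le_one_of_one_le₀ this
            exact mul_nonneg (by linarith) hc0
          · rw [dist_comm]; exact hb y hy
          · exact hb x hx
          · exact h3 x hx y hy
      · refine map_mem_of_Sup _ _ ?_ (bdL_mem_Sup l)
        rintro l' ⟨h1, h2⟩
        refine Sup.mono ?_ (ih (by omega) l' (by omega)
          fun x hx y hy => hc x (h2 hx) y (h2 hy))
        rintro l'' ⟨g1, g2, g3⟩
        exact ⟨g1, fun x hx => hull_mono h2 (g2 x hx), g3⟩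

/-- Invariance, under a family of linear maps, of a cochain restricted to simplices in `P`. -/
def Inv {Γ : Type*} (act : Γ → E →ₗ[ℝ] E) (P : Set E) (η : Ch R E →ₗ[R] R) : Prop :=
  ∀ g l, hull l ⊆ P → η (Finsupp.single (l.map (act g)) 1) = η (Finsupp.single l 1)

lemma Inv.comp {Γ : Type*} {act : Γ → E →ₗ[ℝ] E} {P : Set E} {η : Ch R E →ₗ[R] R}
    (h : Inv act P η) (F : Ch R E →ₗ[R] Ch R E)
    (hF : ∀ g c, F (mapCh (act g) c) = mapCh (act g) (F c))
    (hF' : ∀ l, F (Finsupp.single l 1) ∈ Sup R (fun l' : List E => ∀ x ∈ l', x ∈ hull l)) :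
    Inv act P (η ∘ₗ F) := by
  intro g l hl
  have h1 := hF g (Finsupp.single l 1)
  rw [mapCh_single] at h1
  rw [LinearMap.comp_apply, LinearMap.comp_apply, h1]
  refine eq_of_Sup (η ∘ₗ mapCh (act g)) η (fun l' hl' => ?_) (hF' l)
  rw [LinearMap.comp_apply, mapCh_single]
  exact h g l' ((hull_subset (convex_convexHull ℝ _) hl').trans hl)

/-- The localisation principle. If `z` is a chain in `P` whose boundary is killed by all invariant
cochains, and an invariant cocycle `ω` does not vanish on `z`, then `ω` does not vanish on some
arbitrarily small simplex in `P`. -/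
theorem exists_small {Γ : Type*} {act : Γ → E →ₗ[ℝ] E} {P : Set E}
    (hP : Bornology.IsBounded P) (ω : Ch R E →ₗ[R] R) (hω : Inv act P ω)
    (hωbd : ∀ c, ω (bd R E c) = 0) (n : ℕ) (z : Ch R E)
    (hz : z ∈ Sup R (fun l : List E => l.length ≤ n + 1 ∧ hull l ⊆ P))
    (hzb : ∀ η : Ch R E →ₗ[R] R, Inv act P η → η (bd R E z) = 0)
    (hne : ω z ≠ 0) {δ : ℝ} (hδ : 0 < δ) :
    ∃ l : List E, ω (Finsupp.single l 1) ≠ 0 ∧ (∀ x ∈ l, x ∈ P) ∧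
      ∀ x ∈ l, ∀ y ∈ l, dist x y < δ := by
  obtain ⟨C, hC⟩ := Metric.isBounded_iff.1 hP
  set ρ : ℝ := 1 - ((n + 1 : ℕ) : ℝ)⁻¹ with hρ
  have hρ0 : 0 ≤ ρ := by
    rw [hρ, sub_nonneg]
    exact inv_le_one_of_one_le₀ (by push_cast; linarith [(Nat.cast_nonneg n : (0 : ℝ) ≤ n)])
  have hρ1 : ρ < 1 := by
    rw [hρ, sub_lt_self_iff]
    positivity
  -- iterated subdivision; the homotopy `ht` shows that the value of `ω` does not change
  have step : ∀ M : ℕ, ∃ z' : Ch R E,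
      z' ∈ Sup R (fun l : List E => l.length ≤ n + 1 ∧ hull l ⊆ P ∧
        ∀ x ∈ l, ∀ y ∈ l, dist x y ≤ ρ ^ M * max C 0) ∧
      (∀ η : Ch R E →ₗ[R] R, Inv act P η → η (bd R E z') = 0) ∧ ω z' ≠ 0 := by
    intro M
    induction M with
    | zero =>
      refine ⟨z, Sup.mono ?_ hz, hzb, hne⟩
      rintro l ⟨h1, h2⟩
      refine ⟨h1, h2, fun x hx y hy => ?_⟩
      rw [pow_zero, one_mul]
      exact (hC (h2 (subset_hull hx)) (h2 (subset_hull hy))).trans (le_max_left _ _)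
    | succ M ih =>
      obtain ⟨z', h1, h2, h3⟩ := ih
      refine ⟨sd R E (n + 1) z', ?_, ?_, ?_⟩
      · refine map_mem_of_Sup _ _ ?_ h1
        rintro l ⟨g1, g2, g3⟩
        refine Sup.mono ?_ (sd_small (N := n + 1) (n + 1) le_rfl l g1 g3 (by positivity))
        rintro l' ⟨k1, k2, k3⟩
        refine ⟨k1, (hull_subset (convex_convexHull ℝ _) k2).trans g2, ?_⟩
        intro x hx y hy
        rw [pow_succ', mul_assoc]
        exact k3 x hx y hy
      · intro η hη
        rw [bd_sd]
        exact h2 (η ∘ₗ sd R E n) (hη.comp _ (fun g c => sd_map _ _ _) (sd_mem_hull n))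
      · have e1 := congrArg ω (bd_ht n z')
        have e2 : ω (ht R E n (bd R E z')) = 0 :=
          h2 (ω ∘ₗ ht R E n) (hω.comp _ (fun g c => ht_map _ _ _) (ht_mem_hull n))
        rw [hωbd, map_sub, map_sub, e2, sub_zero] at e1
        rwa [← sub_eq_zero.1 e1.symm]
  obtain ⟨M, hM⟩ : ∃ M : ℕ, ρ ^ M * max C 0 < δ := by
    have := ((tendsto_pow_atTop_nhds_zero_of_lt_one hρ0 hρ1).mul_const (max C 0))
    rw [zero_mul] at this
    exact (this.eventually_lt_const hδ).exists
  obtain ⟨z', h1, -, h3⟩ := step M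
  by_contra! hcon
  refine h3 (eq_of_Sup ω 0 (fun l hl => ?_) h1)
  by_contra hl0
  obtain ⟨x, hx, y, hy, hxy⟩ := hcon l hl0 fun x hx => hl.2.1 (subset_hull hx)
  exact absurd (hl.2.2 x hx y hy) (by linarith)
end Subdivision

/-! ### The equivariant chain -/

section Cycle
variable {p : ℕ} [Fact p.Prime] {ι : Type*} [Fintype ι] [DecidableEq ι]

/-- Lower the `i`-th entry of `D` by one. -/
def dec (D : ι → ℕ) (i : ι) : ι → ℕ := Function.update D i (D i - 1)

lemma dec_self (D : ι → ℕ) (i : ι) : dec D i i = D i - 1 := by simp [dec]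

lemma dec_of_ne (D : ι → ℕ) {i k : ι} (h : k ≠ i) : dec D i k = D k := by simp [dec, h]

lemma dec_comm (D : ι → ℕ) (i k : ι) : dec (dec D i) k = dec (dec D k) i := by
  by_cases h : i = k
  · rw [h]
  · rw [dec, dec, dec, dec, Function.update_of_ne (Ne.symm h), Function.update_of_ne h,
      Function.update_comm (Ne.symm h)]

lemma dec_le (D : ι → ℕ) (i k : ι) : dec D i k ≤ D k := by
  by_cases h : k = i
  · subst h; simp [dec_self]
  · rw [dec_of_ne D h]

lemma sum_dec {D : ι → ℕ} {i : ι} (h : D i ≠ 0) (s : Finset ι) (hi : i ∈ s) :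
    ∑ k ∈ s, dec D i k + 1 = ∑ k ∈ s, D k := by
  rw [← Finset.add_sum_erase s _ hi, ← Finset.add_sum_erase s D hi, dec_self,
    Finset.sum_congr rfl fun k hk => dec_of_ne D (Finset.ne_of_mem_erase hk)]
  omega

lemma sum_dec_of_notMem {D : ι → ℕ} {i : ι} (s : Finset ι) (hi : i ∉ s) :
    ∑ k ∈ s, dec D i k = ∑ k ∈ s, D k :=
  Finset.sum_congr rfl fun k hk => dec_of_ne D fun h => hi (h ▸ hk)

/-- The shuffle sign of moving a step in direction `i` to the front, if `D` lists the numbers of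
remaining steps; zero if no step in direction `i` remains. -/
def sg (p : ℕ) (ord : ι → ℕ) (D : ι → ℕ) (i : ι) : ZMod p :=
  if D i = 0 then 0 else (-1) ^ ∑ k with ord k < ord i, D k

/-- The shuffle signs of two steps in different directions anticommute. -/
lemma sg_antisymm {ord : ι → ℕ} (hord : Function.Injective ord) (D : ι → ℕ) {i k : ι}
    (h : i ≠ k) :
    sg p ord D i * sg p ord (dec D i) k = -(sg p ord D k * sg p ord (dec D k) i) := by
  have key : ∀ i k : ι, ord i < ord k →
      sg p ord D i * sg p ord (dec D i) k = -(sg p ord D k * sg p ord (dec D k) i) := by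
    intro i k hik
    have hne : i ≠ k := fun h => by simp [h] at hik
    simp only [sg, dec_of_ne D hne, dec_of_ne D hne.symm]
    by_cases hi : D i = 0
    · simp [hi]
    by_cases hk : D k = 0
    · simp [hk]
    simp only [hi, hk, if_false]
    rw [sum_dec_of_notMem (D := D) (i := k) _ (by simp; omega),
      ← sum_dec (D := D) hi {l | ord l < ord k} (by simpa using hik), pow_succ]
    ring
  rcases lt_or_gt_of_ne (hord.ne h) with h' | h'
  · exact key i k h'
  · rw [key k i h', neg_neg]

/-- Coefficients of the periodic resolution of `ZMod p`: `1 - T⁻¹` in even degrees and the norm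
element in odd degrees. -/
def co {p : ℕ} (m : ℕ) (a : ZMod p) : ZMod p :=
  if Even m then (if a = 0 then 1 else 0) - (if a = -1 then 1 else 0) else 1

lemma sum_co (m : ℕ) : ∑ a : ZMod p, co m a = 0 := by
  unfold co
  split_ifs with h
  · simp
  · simp

/-- Consecutive coefficients have zero convolution. -/
lemma conv_co {m : ℕ} (hm : m ≠ 0) {M : Type*} [AddCommGroup M] [Module (ZMod p) M]
    (F : ZMod p → M) :
    ∑ a : ZMod p, ∑ b : ZMod p, (co m a * co (m - 1) b) • F (a + b) = 0 := by
  have h1 : ∀ a b : ZMod p, co m a * co (m - 1) b = (if Even m then co m a else co (m - 1) b) := by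
    intro a b
    by_cases h : Even m
    · have : ¬ Even (m - 1) := by
        rw [Nat.even_sub' (by omega)]
        simp [h]
      simp [co, h, this]
    · simp [co, h]
  simp only [h1]
  split_ifs with h
  · have : ∀ a : ZMod p, ∑ b, co m a • F (a + b) = co m a • ∑ b, F b := by
      intro a
      rw [← Finset.smul_sum]
      congr 1
      exact Fintype.sum_equiv (Equiv.addLeft a) _ _ fun b => rfl
    simp only [this, ← Finset.sum_smul, sum_co, zero_smul]
  · rw [Finset.sum_comm]
    have : ∀ b : ZMod p, ∑ a, co (m - 1) b • F (a + b) = co (m - 1) b • ∑ b, F b := by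
      intro b
      rw [← Finset.smul_sum]
      congr 1
      exact Fintype.sum_equiv (Equiv.addRight b) _ _ fun b => rfl
    simp only [this, ← Finset.sum_smul, sum_co, zero_smul]

variable {E : Type*}

/-- The equivariant chain, a cycle modulo the group action: the sum over all lattice paths from `D`
down to `0`, starting at the vertex `V D g`, of the corresponding simplices. A step in direction `i`
adds an element `a` to the `i`-th coordinate of `g`, with coefficient `co (D i) a`; the sign is the
shuffle sign. -/
def zc (ord : ι → ℕ) (V : (ι → ℕ) → (ι → ZMod p) → E) :
    ℕ → (ι → ℕ) → (ι → ZMod p) → Ch (ZMod p) E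
  | 0, D, g => cone (V D g) (Finsupp.single [] 1)
  | n + 1, D, g => cone (V D g) (∑ i, ∑ a : ZMod p,
      (sg p ord D i * co (D i) a) • zc ord V n (dec D i) (g + Pi.single i a))

/-- The face of `zc` opposite to the initial vertex. -/
def yc (ord : ι → ℕ) (V : (ι → ℕ) → (ι → ZMod p) → E) (n : ℕ) (D : ι → ℕ) (g : ι → ZMod p) :
    Ch (ZMod p) E :=
  ∑ i, ∑ a : ZMod p, (sg p ord D i * co (D i) a) • zc ord V n (dec D i) (g + Pi.single i a)

lemma zc_succ (ord : ι → ℕ) (V : (ι → ℕ) → (ι → ZMod p) → E) (n : ℕ) (D : ι → ℕ)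
    (g : ι → ZMod p) : zc ord V (n + 1) D g = cone (V D g) (yc ord V n D g) := rfl

/-- The double sum over two consecutive steps, organised by pairs of directions, has only diagonal
contributions, provided the summand is symmetric. -/
lemma sum_pairs {ord : ι → ℕ} (hord : Function.Injective ord) (D : ι → ℕ)
    {M : Type*} [AddCommGroup M] [Module (ZMod p) M] (F : ι → ι → M)
    (hF : ∀ i k, i ≠ k → F i k = F k i) :
    ∑ i, ∑ k, (sg p ord D i * sg p ord (dec D i) k) • F i k =
      ∑ i, (sg p ord D i * sg p ord (dec D i) i) • F i i := by
  rw [← Finset.sum_product', ← Finset.sum_filter_add_sum_filter_not _ (fun x => x.1 = x.2)]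
  have h0 : ∑ x ∈ (Finset.univ ×ˢ Finset.univ : Finset (ι × ι)) with ¬ x.1 = x.2,
      (sg p ord D x.1 * sg p ord (dec D x.1) x.2) • F x.1 x.2 = 0 := by
    refine Finset.sum_involution (fun x _ => x.swap) ?_ ?_ ?_ ?_
    · rintro ⟨i, k⟩ h
      have hik : i ≠ k := by simpa using h
      simp only [Prod.swap]
      rw [sg_antisymm hord D hik, hF i k hik, neg_smul, neg_add_cancel]
    · rintro ⟨i, k⟩ h _ h'
      simp at h h'
      exact h h'.2
    · rintro ⟨i, k⟩ h
      simpa [eq_comm] using h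
    · rintro ⟨i, k⟩ h
      rfl
  rw [h0, add_zero]
  symm
  refine Finset.sum_bij (fun i _ => (i, i)) ?_ ?_ ?_ ?_
  · simp
  · intro a _ b _ h; exact (Prod.mk.inj h).1
  · rintro ⟨i, k⟩ h
    simp at h
    exact ⟨i, by simp, by simp [h]⟩
  · simp

/-- Consecutive steps in different directions cancel by the antisymmetry of the signs, and those in
the same direction by `conv_co`. -/
lemma bd_yc {ord : ι → ℕ} (hord : Function.Injective ord) (V : (ι → ℕ) → (ι → ZMod p) → E)
    (n : ℕ) (D : ι → ℕ) (g : ι → ZMod p) (hD : ∑ i, D i = n + 1) :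
    bd (ZMod p) E (yc ord V n D g) = 0 := by
  induction n generalizing D g with
  | zero =>
    simp only [yc, map_sum, map_smul, zc, bd_cone, bd_single, bdL, map_zero, sub_zero]
    simp only [mul_smul, ← Finset.smul_sum, ← Finset.sum_smul, sum_co, zero_smul, smul_zero,
      Finset.sum_const_zero]
  | succ n ih =>
    have h1 : bd (ZMod p) E (yc ord V (n + 1) D g) = ∑ i, ∑ a : ZMod p,
        (sg p ord D i * co (D i) a) • yc ord V n (dec D i) (g + Pi.single i a) := by
      simp only [yc, map_sum, map_smul]
      refine Finset.sum_congr rfl fun i _ => Finset.sum_congr rfl fun a _ => ?_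
      by_cases hi : D i = 0
      · simp [sg, hi]
      · rw [zc_succ, bd_cone, ih, map_zero, sub_zero]
        · rfl
        · have := sum_dec hi Finset.univ (Finset.mem_univ i)
          omega
    have h2 : bd (ZMod p) E (yc ord V (n + 1) D g) = ∑ i, ∑ k,
        (sg p ord D i * sg p ord (dec D i) k) • ∑ a : ZMod p, ∑ b : ZMod p,
        (co (D i) a * co (dec D i k) b) •
          zc ord V n (dec (dec D i) k) (g + Pi.single i a + Pi.single k b) := by
      rw [h1]
      refine Finset.sum_congr rfl fun i _ => ?_
      simp only [yc, Finset.smul_sum]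
      rw [Finset.sum_comm]
      refine Finset.sum_congr rfl fun k _ => Finset.sum_congr rfl fun a _ =>
        Finset.sum_congr rfl fun b _ => ?_
      simp only [smul_smul]
      congr 1
      ring
    rw [h2, sum_pairs hord]
    · refine Finset.sum_eq_zero fun i _ => ?_
      by_cases hi : D i = 0
      · simp [sg, hi]
      · have := conv_co (p := p) hi
          (fun a => zc ord V n (dec (dec D i) i) (g + Pi.single i a))
        simp only [dec_self, add_assoc, ← Pi.single_add]
        rw [this, smul_zero]
    · intro i k hik
      rw [Finset.sum_comm]
      refine Finset.sum_congr rfl fun b _ => Finset.sum_congr rfl fun a _ => ?_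
      rw [dec_of_ne D hik.symm, dec_of_ne D hik, mul_comm, dec_comm, add_right_comm]

lemma bd_zc_succ {ord : ι → ℕ} (hord : Function.Injective ord) (V : (ι → ℕ) → (ι → ZMod p) → E)
    (n : ℕ) (D : ι → ℕ) (g : ι → ZMod p) (hD : ∑ i, D i = n + 1) :
    bd (ZMod p) E (zc ord V (n + 1) D g) = yc ord V n D g := by
  rw [zc_succ, bd_cone, bd_yc hord V n D g hD, map_zero, sub_zero]

lemma zc_map (ord : ι → ℕ) (V : (ι → ℕ) → (ι → ZMod p) → E) (F : E → E) (h : ι → ZMod p)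
    (D₀ : ι → ℕ) (hF : ∀ D g, D ≤ D₀ → F (V D g) = V D (g + h)) (n : ℕ) (D : ι → ℕ)
    (hD : D ≤ D₀) (g : ι → ZMod p) :
    mapCh F (zc ord V n D g) = zc ord V n D (g + h) := by
  induction n generalizing D g with
  | zero => simp [zc, hF _ _ hD]
  | succ n ih =>
    simp only [zc, mapCh_cone, hF _ _ hD, map_sum, map_smul]
    refine Finset.sum_congr rfl fun i _ => ?_
    refine Finset.sum_congr rfl fun a _ => ?_
    rw [ih _ (le_trans (fun k => dec_le D i k) hD), add_right_comm]

/-- The simplices of `zc` are chains for any transitive relation that holds along single steps. -/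
lemma zc_mem_Sup (ord : ι → ℕ) (V : (ι → ℕ) → (ι → ZMod p) → E)
    (Rel : (ι → ℕ) × (ι → ZMod p) → (ι → ℕ) × (ι → ZMod p) → Prop)
    (htrans : ∀ x y z, Rel x y → Rel y z → Rel x z)
    (hrefl : ∀ x, Rel x x)
    (hstep : ∀ D g i a, D i ≠ 0 → Rel (D, g) (dec D i, g + Pi.single i a))
    (n : ℕ) (D : ι → ℕ) (g : ι → ZMod p) :
    zc ord V n D g ∈ Sup (ZMod p) (fun l : List E => l.length = n + 1 ∧
      ∃ l' : List ((ι → ℕ) × (ι → ZMod p)), l = l'.map (fun x => V x.1 x.2) ∧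
        l'.Pairwise Rel ∧ ∀ x ∈ l', Rel (D, g) x) := by
  induction n generalizing D g with
  | zero =>
    rw [zc, cone_single]
    exact single_mem_Sup ⟨rfl, [(D, g)], rfl, by simp, by simp [hrefl]⟩
  | succ n ih =>
    rw [zc]
    refine cone_mem_Sup (Q := fun l : List E => l.length = n + 1 ∧
      ∃ l' : List ((ι → ℕ) × (ι → ZMod p)), l = l'.map (fun x => V x.1 x.2) ∧
        l'.Pairwise Rel ∧ ∀ x ∈ l', Rel (D, g) x) _ ?_ ?_
    · rintro l ⟨h1, l', rfl, h2, h3⟩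
      refine ⟨by simpa using h1, (D, g) :: l', rfl, List.pairwise_cons.2 ⟨h3, h2⟩, ?_⟩
      intro x hx
      rcases List.mem_cons.1 hx with rfl | hx
      exacts [hrefl _, h3 x hx]
    · refine Submodule.sum_mem _ fun i _ => Submodule.sum_mem _ fun a _ => ?_
      by_cases hi : D i = 0
      · simp [sg, hi]
      · refine Submodule.smul_mem _ _ (Sup.mono ?_ (ih (dec D i) (g + Pi.single i a)))
        rintro l ⟨h1, l', rfl, h2, h3⟩
        exact ⟨h1, l', rfl, h2, fun x hx => htrans _ _ _ (hstep D g i a hi) (h3 x hx)⟩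

end Cycle

/-! ### Cup products of carry classes -/

section Cochains
variable {p : ℕ} [Fact p.Prime] {E J : Type*}

/-- The carry cocycle of the extension of `ZMod p` by `ℤ`, with respect to the lift of residues of
least absolute value. -/
def bk (u v : ZMod p) : ℤ := (u.valMinAbs + v.valMinAbs - (u + v).valMinAbs) / p

lemma bk_mul (u v : ZMod p) : (p : ℤ) * bk u v = u.valMinAbs + v.valMinAbs - (u + v).valMinAbs := by
  refine Int.mul_ediv_cancel' ?_
  rw [← ZMod.intCast_zmod_eq_zero_iff_dvd]
  simp

lemma p_ne_zero' : (p : ℤ) ≠ 0 := by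
  exact_mod_cast (Fact.out : p.Prime).ne_zero

lemma bk_cocycle (u v w : ZMod p) :
    bk v w - bk (u + v) w + bk u (v + w) - bk u v = 0 := by
  refine (mul_right_inj' (p_ne_zero' (p := p))).1 ?_
  have h1 := bk_mul v w
  have h2 := bk_mul (u + v) w
  have h3 := bk_mul u (v + w)
  have h4 := bk_mul u v
  rw [← add_assoc] at h3
  linear_combination h1 - h2 + h3 - h4

/-- The carry vanishes on triples of labels that take only two adjacent values. -/
lemma bk_eq_zero (hp2 : p ≠ 2) (a x y z : ZMod p) (hx : x = a ∨ x = a + 1) (hy : y = a ∨ y = a + 1)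
    (hz : z = a ∨ z = a + 1) : bk (y - x) (z - y) = 0 := by
  refine (mul_right_inj' (p_ne_zero' (p := p))).1 ?_
  have hpp : p.Prime := Fact.out
  have hp3 : 2 < p := lt_of_le_of_ne hpp.two_le hp2.symm
  have h1 : (1 : ZMod p).valMinAbs = 1 := by
    have : ((1 : ℕ) : ZMod p).valMinAbs = ((1 : ℕ) : ℤ) :=
      ZMod.valMinAbs_natCast_of_le_half (by omega)
    simpa using this
  have h2 : (-1 : ZMod p).valMinAbs = -1 := by
    rw [ZMod.valMinAbs_neg_of_ne_half, h1]
    intro h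
    have h' : ((2 * 1 : ℕ) : ZMod p) = 0 := by
      have hh : (1 : ZMod p).val = 1 := by
        rw [ZMod.val_one_eq_one_mod, Nat.mod_eq_of_lt (by omega)]
      rw [hh] at h
      rw [h]; simp
    rw [ZMod.natCast_eq_zero_iff] at h'
    have := Nat.le_of_dvd (by norm_num) h'
    omega
  rw [bk_mul]
  rcases hx with rfl | rfl <;> rcases hy with rfl | rfl <;> rcases hz with rfl | rfl <;>
    simp [h1, h2]

/-- Cup product of the carry classes of the labellings `s j`, `j ∈ js`, as a function on
sequences. -/
def omTwo (s : J → E → ZMod p) : List J → List E → ZMod p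
  | [], l => if l.length = 1 then 1 else 0
  | j :: js, x :: y :: z :: r => (bk (s j y - s j x) (s j z - s j y) : ZMod p) * omTwo s js (z :: r)
  | _ :: _, _ => 0

/-- Cup product of the coboundaries of the labellings `s j`, `j ∈ js`, as a function on
sequences. -/
def omOne (s : J → E → ZMod p) : List J → List E → ZMod p
  | [], l => if l.length = 1 then 1 else 0
  | j :: js, x :: y :: r => (s j y - s j x) * omOne s js (y :: r)
  | _ :: _, _ => 0

/-- The linear functional on chains with given values on sequences. -/
abbrev lin (o : List E → ZMod p) : Ch (ZMod p) E →ₗ[ZMod p] ZMod p :=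
  Finsupp.linearCombination (ZMod p) o

lemma lin_zero_of_Sup {o : List E → ZMod p} {Q : List E → Prop} (h : ∀ l, Q l → o l = 0)
    {c : Ch (ZMod p) E} (hc : c ∈ Sup (ZMod p) Q) : lin o c = 0 := by
  have := eq_of_Sup (lin o) 0 (Q := Q) (fun l hl => by simp [h l hl]) hc
  simpa using this

lemma lin_bd_of_bdL {o : List E → ZMod p} (h : ∀ l, lin o (bdL (ZMod p) l) = 0)
    (c : Ch (ZMod p) E) : lin o (bd (ZMod p) E c) = 0 := by
  have : lin o ∘ₗ bd (ZMod p) E = 0 := by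
    ext l : 2
    simpa using h l
  simpa using LinearMap.congr_fun this c

lemma lin_length_bd (l : List E) :
    lin (fun l : List E => if l.length = 1 then (1 : ZMod p) else 0) (bdL (ZMod p) l) = 0 := by
  match l with
  | [] => simp [bdL]
  | [x] => simp [bdL]
  | [x, y] => simp [bdL]
  | x :: y :: z :: r =>
    refine lin_zero_of_Sup ?_ (bdL_mem_Sup _)
    rintro l ⟨h1, h2⟩
    simp at h1
    simp only [ite_eq_right_iff]
    omega

lemma omTwo_cone (s : J → E → ZMod p) (j : J) (js : List J) (x y z : E) (c : Ch (ZMod p) E) :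
    lin (omTwo s (j :: js)) (cone x (cone y (cone z c))) =
      (bk (s j y - s j x) (s j z - s j y) : ZMod p) * lin (omTwo s js) (cone z c) := by
  have : lin (omTwo s (j :: js)) ∘ₗ cone x ∘ₗ cone y ∘ₗ cone z =
      (bk (s j y - s j x) (s j z - s j y) : ZMod p) • (lin (omTwo s js) ∘ₗ cone z) := by
    ext l : 2
    simp [omTwo]
  simpa using LinearMap.congr_fun this c

lemma omOne_cone (s : J → E → ZMod p) (j : J) (js : List J) (x y : E) (c : Ch (ZMod p) E) :
    lin (omOne s (j :: js)) (cone x (cone y c)) =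
      (s j y - s j x) * lin (omOne s js) (cone y c) := by
  have : lin (omOne s (j :: js)) ∘ₗ cone x ∘ₗ cone y =
      (s j y - s j x) • (lin (omOne s js) ∘ₗ cone y) := by
    ext l : 2
    simp [omOne]
  simpa using LinearMap.congr_fun this c

/-- `omTwo` is a cocycle, since the carries are (`bk_cocycle`). -/
lemma omTwo_bd (s : J → E → ZMod p) (js : List J) (l : List E) :
    lin (omTwo s js) (bdL (ZMod p) l) = 0 := by
  induction js generalizing l with
  | nil =>
    exact lin_length_bd l
  | cons j js ih =>
    match l with
    | [] => simp [bdL]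
    | [x] => simp [bdL, omTwo]
    | [x, y] => simp [bdL, omTwo]
    | [x, y, z] => simp [bdL, omTwo]
    | x :: y :: z :: w :: r =>
      have h1 := ih (z :: w :: r)
      rw [bdL, map_sub, sub_eq_zero] at h1
      rw [bdL, bdL, bdL]
      simp only [map_sub, omTwo_cone, ← h1, cone_single, Finsupp.linearCombination_single,
        one_smul, omTwo]
      have h2 := bk_cocycle (s j y - s j x) (s j z - s j y) (s j w - s j z)
      rw [show s j y - s j x + (s j z - s j y) = s j z - s j x by ring,
        show s j z - s j y + (s j w - s j z) = s j w - s j y by ring] at h2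
      have h3 := congrArg (Int.cast : ℤ → ZMod p) h2
      push_cast at h3
      linear_combination omTwo s js (w :: r) * h3

/-- `omOne` is a cocycle. -/
lemma omOne_bd (s : J → E → ZMod p) (js : List J) (l : List E) :
    lin (omOne s js) (bdL (ZMod p) l) = 0 := by
  induction js generalizing l with
  | nil =>
    exact lin_length_bd l
  | cons j js ih =>
    match l with
    | [] => simp [bdL]
    | [x] => simp [bdL, omOne]
    | [x, y] => simp [bdL, omOne]
    | x :: y :: w :: r =>
      have h1 := ih (y :: w :: r)
      rw [bdL, map_sub, sub_eq_zero] at h1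
      rw [bdL, bdL]
      simp only [map_sub, omOne_cone, ← h1, cone_single, Finsupp.linearCombination_single,
        one_smul, omOne]
      ring

/-- A simplex on which `omTwo` does not vanish sees, for every factor, more than two adjacent
labels. -/
lemma omTwo_supp (hp2 : p ≠ 2) (s : J → E → ZMod p) (js : List J) (l : List E)
    (h : omTwo s js l ≠ 0) (j : J) (hj : j ∈ js) (a : ZMod p) :
    ¬ ∀ x ∈ l, s j x = a ∨ s j x = a + 1 := by
  induction js generalizing l with
  | nil => simp at hj
  | cons j' js ih =>
    match l with
    | [] => simp [omTwo] at h
    | [x] => simp [omTwo] at h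
    | [x, y] => simp [omTwo] at h
    | x :: y :: z :: r =>
      rw [omTwo] at h
      intro hall
      rcases List.mem_cons.1 hj with rfl | hj
      · refine left_ne_zero_of_mul h ?_
        rw [bk_eq_zero hp2 a _ _ _ (hall x (by simp)) (hall y (by simp)) (hall z (by simp))]
        simp
      · exact ih (z :: r) (right_ne_zero_of_mul h) hj
          fun x hx => hall x (List.mem_cons_of_mem _ (List.mem_cons_of_mem _ hx))

/-- A simplex on which `omOne` does not vanish sees, for every factor, more than one label. -/
lemma omOne_supp (s : J → E → ZMod p) (js : List J) (l : List E)
    (h : omOne s js l ≠ 0) (j : J) (hj : j ∈ js) (a : ZMod p) :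
    ¬ ∀ x ∈ l, s j x = a := by
  induction js generalizing l with
  | nil => simp at hj
  | cons j' js ih =>
    match l with
    | [] => simp [omOne] at h
    | [x] => simp [omOne] at h
    | x :: y :: r =>
      rw [omOne] at h
      intro hall
      rcases List.mem_cons.1 hj with rfl | hj
      · refine left_ne_zero_of_mul h ?_
        rw [hall x (by simp), hall y (by simp), sub_self]
      · exact ih (y :: r) (right_ne_zero_of_mul h) hj
          fun x hx => hall x (List.mem_cons_of_mem _ hx)

lemma omTwo_map (s : J → E → ZMod p) (A : E → E) (t : J → ZMod p) (js : List J) (l : List E)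
    (h : ∀ j, ∀ x ∈ l, s j (A x) = s j x + t j) :
    omTwo s js (l.map A) = omTwo s js l := by
  induction js generalizing l with
  | nil => simp [omTwo]
  | cons j js ih =>
    match l with
    | [] => simp [omTwo]
    | [x] => simp [omTwo]
    | [x, y] => simp [omTwo]
    | x :: y :: z :: r =>
      have := ih (z :: r) fun j x hx =>
        h j x (List.mem_cons_of_mem _ (List.mem_cons_of_mem _ hx))
      rw [List.map_cons] at this
      simp only [List.map_cons, omTwo, this, h j x (by simp), h j y (by simp), h j z (by simp),
        add_sub_add_right_eq_sub]

lemma omOne_map (s : J → E → ZMod p) (A : E → E) (t : J → ZMod p) (js : List J) (l : List E)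
    (h : ∀ j, ∀ x ∈ l, s j (A x) = s j x + t j) :
    omOne s js (l.map A) = omOne s js l := by
  induction js generalizing l with
  | nil => simp [omOne]
  | cons j js ih =>
    match l with
    | [] => simp [omOne]
    | [x] => simp [omOne]
    | x :: y :: r =>
      have := ih (y :: r) fun j x hx => h j x (List.mem_cons_of_mem _ hx)
      rw [List.map_cons] at this
      simp only [List.map_cons, omOne, this, h j x (by simp), h j y (by simp),
        add_sub_add_right_eq_sub]

end Cochains

/-! ### Evaluation on the equivariant chain -/

section Evaluation

lemma sum_co_two (u v χ : ZMod 2) (m : ℕ) : ∑ a : ZMod 2, co m a * (u + a * χ - v) = χ := by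
  by_cases hm : Even m
  · simp only [co, hm, if_true]
    revert u v χ; decide
  · simp only [co, hm, if_false]
    revert u v χ; decide

variable {p : ℕ} [Fact p.Prime] {J : Type*} {ι : Type*} [Fintype ι] [DecidableEq ι]

/-- The coefficient of the monomial with exponents `D` in the product of the linear forms
`χ j`, `j ∈ js`, divided powers being understood: choose one variable from each factor. -/
def cf (χ : J → ι → ZMod p) : List J → (ι → ℕ) → ZMod p
  | [], _ => 1
  | j :: js, D => ∑ i, if D i = 0 then 0 else χ j i * cf χ js (dec D i)

lemma sum_co_even {m : ℕ} (hm : Even m) (F : ZMod p → ZMod p) :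
    ∑ a, co m a * F a = F 0 - F (-1) := by
  simp [co, hm, sub_mul]

/-- Sum of the carries around two steps in the same direction. -/
lemma bk_diag (m : ℕ) (hm : Even m) (hm0 : m ≠ 0) (u v χ : ZMod p) :
    ∑ a : ZMod p, ∑ b : ZMod p, co m a * co (m - 1) b * (bk (u + a * χ) (v + b * χ) : ZMod p)
      = χ := by
  have hm' : ¬ Even (m - 1) := by
    rw [Nat.even_sub' (by omega)]
    simp [hm]
  have h1 : ∑ a : ZMod p, ∑ b : ZMod p,
      co m a * co (m - 1) b * (bk (u + a * χ) (v + b * χ) : ZMod p) =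
      ((∑ b : ZMod p, bk u (v + b * χ) - ∑ b : ZMod p, bk (u - χ) (v + b * χ) : ℤ) : ZMod p) := by
    simp only [mul_assoc, ← Finset.mul_sum, sum_co_even hm]
    push_cast
    simp only [co, hm', if_false, zero_mul, add_zero, one_mul, neg_one_mul, ← sub_eq_add_neg]
  have h2 : ∑ b : ZMod p, bk u (v + b * χ) - ∑ b : ZMod p, bk (u - χ) (v + b * χ) =
      u.valMinAbs - (u - χ).valMinAbs := by
    refine (mul_right_inj' (p_ne_zero' (p := p))).1 ?_
    rw [mul_sub, Finset.mul_sum, Finset.mul_sum]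
    simp only [bk_mul, Finset.sum_sub_distrib, Finset.sum_add_distrib, Finset.sum_const,
      Finset.card_univ, ZMod.card]
    have h3 : ∑ b : ZMod p, (u - χ + (v + b * χ)).valMinAbs =
        ∑ b : ZMod p, (u + (v + b * χ)).valMinAbs :=
      Fintype.sum_equiv (Equiv.subRight 1) _ _ fun b => by
        rw [Equiv.subRight_apply]; congr 1; ring
    rw [h3]
    simp only [nsmul_eq_mul]
    ring
  rw [h1, h2]
  simp

/-- The sum of the carries around two steps in different directions does not depend on the order of
the two steps. -/
lemma bk_offdiag (m n : ℕ) (hm : Even m) (hn : Even n) (u v u' v' χ χ' : ZMod p)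
    (h : u + v = u' + v') :
    ∑ a : ZMod p, ∑ b : ZMod p, co m a * co n b * (bk (u + a * χ) (v + b * χ') : ZMod p)
      = ∑ a : ZMod p, ∑ b : ZMod p, co n a * co m b * (bk (u' + a * χ') (v' + b * χ) : ZMod p) := by
  have h1 : ∀ (m n : ℕ) (hm : Even m) (hn : Even n) (u v χ χ' : ZMod p),
    ∑ a : ZMod p, ∑ b : ZMod p, co m a * co n b * (bk (u + a * χ) (v + b * χ') : ZMod p) =
      ((bk u v - bk (u - χ) v - bk u (v - χ') + bk (u - χ) (v - χ') : ℤ) : ZMod p) := by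
    intro m n hm hn u v χ χ'
    simp only [mul_assoc, ← Finset.mul_sum, sum_co_even hm, sum_co_even hn]
    push_cast
    simp only [zero_mul, add_zero, neg_one_mul, ← sub_eq_add_neg]
    ring
  rw [h1 m n hm hn, h1 n m hn hm]
  congr 1
  refine (mul_right_inj' (p_ne_zero' (p := p))).1 ?_
  simp only [mul_add, mul_sub, bk_mul]
  rw [show u - χ + v = u + v - χ by ring, show u + (v - χ') = u + v - χ' by ring,
    show u - χ + (v - χ') = u + v - χ - χ' by ring,
    show u' - χ' + v' = u' + v' - χ' by ring, show u' + (v' - χ) = u' + v' - χ by ring,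
    show u' - χ' + (v' - χ) = u' + v' - χ - χ' by ring, h]
  ring

variable {E : Type*}

lemma zc_eq_cone (ord : ι → ℕ) (V : (ι → ℕ) → (ι → ZMod p) → E) (n : ℕ) (D : ι → ℕ)
    (g : ι → ZMod p) : ∃ c, zc ord V n D g = cone (V D g) c := by
  cases n with
  | zero => exact ⟨_, rfl⟩
  | succ n => exact ⟨_, rfl⟩

lemma omTwo_zc (s : J → E → ZMod p) (j : J) (js : List J) (ord : ι → ℕ)
    (V : (ι → ℕ) → (ι → ZMod p) → E) (n : ℕ) (D : ι → ℕ) (g : ι → ZMod p) :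
    lin (omTwo s (j :: js)) (zc ord V (n + 2) D g) = ∑ i, ∑ k,
      (sg p ord D i * sg p ord (dec D i) k) • ∑ a : ZMod p, ∑ b : ZMod p,
        co (D i) a * co (dec D i k) b *
        (bk (s j (V (dec D i) (g + Pi.single i a)) - s j (V D g))
          (s j (V (dec (dec D i) k) (g + Pi.single i a + Pi.single k b)) -
            s j (V (dec D i) (g + Pi.single i a))) : ZMod p) *
        lin (omTwo s js) (zc ord V n (dec (dec D i) k) (g + Pi.single i a + Pi.single k b)) := by
  rw [zc_succ, yc]
  simp only [zc_succ, yc, map_sum, map_smul]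
  refine Finset.sum_congr rfl fun i _ => ?_
  simp only [Finset.smul_sum]
  rw [Finset.sum_comm]
  refine Finset.sum_congr rfl fun k _ => Finset.sum_congr rfl fun a _ =>
        Finset.sum_congr rfl fun b _ => ?_
  obtain ⟨c, hc⟩ := zc_eq_cone ord V n (dec (dec D i) k) (g + Pi.single i a + Pi.single k b)
  rw [hc, omTwo_cone]
  simp only [smul_eq_mul]
  ring

lemma omOne_zc (s : J → E → ZMod p) (j : J) (js : List J) (ord : ι → ℕ)
    (V : (ι → ℕ) → (ι → ZMod p) → E) (n : ℕ) (D : ι → ℕ) (g : ι → ZMod p) :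
    lin (omOne s (j :: js)) (zc ord V (n + 1) D g) = ∑ i,
      sg p ord D i  * ∑ a : ZMod p, co (D i) a *
        (s j (V (dec D i) (g + Pi.single i a)) - s j (V D g)) *
        lin (omOne s js) (zc ord V n (dec D i) (g + Pi.single i a)) := by
  rw [zc_succ, yc]
  simp only [map_sum, map_smul]
  refine Finset.sum_congr rfl fun i _ => ?_
  simp only [Finset.mul_sum]
  refine Finset.sum_congr rfl fun a _ => ?_
  obtain ⟨c, hc⟩ := zc_eq_cone ord V n (dec D i) (g + Pi.single i a)
  rw [hc, omOne_cone]
  simp only [smul_eq_mul]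
  ring

lemma dec_le' {D D₀ : ι → ℕ} (h : D ≤ D₀) (i : ι) : dec D i ≤ D₀ :=
  le_trans (fun k => dec_le D i k) h

lemma two_smul_dec (D : ι → ℕ) (i : ι) : dec (dec (2 • D) i) i = 2 • dec D i := by
  ext k
  by_cases h : k = i
  · subst h; simp [dec_self]; omega
  · simp [dec_of_ne _ h]

/-- The value of the cocycle `omTwo` on the equivariant chain. The first factor consumes two steps
of each path: two steps in the same direction contribute the value of the character (`bk_diag`), two
steps in different directions cancel against the same steps in the other order (`bk_offdiag`). -/
lemma omTwo_eval (s : J → E → ZMod p) (χ : J → ι → ZMod p) {ord : ι → ℕ}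
    (hord : Function.Injective ord) (V : (ι → ℕ) → (ι → ZMod p) → E) (D₀ : ι → ℕ)
    (hs : ∀ j D g, D ≤ D₀ → s j (V D g) = s j (V D 0) + ∑ i, χ j i * g i)
    (hinv : ∀ js n D g, D ≤ D₀ →
      lin (omTwo s js) (zc ord V n D g) = lin (omTwo s js) (zc ord V n D 0))
    (js : List J) (D : ι → ℕ) (hD : 2 • D ≤ D₀) :
    lin (omTwo s js) (zc ord V (2 * js.length) (2 • D) 0) = cf χ js D := by
  induction js generalizing D with
  | nil => simp [zc, omTwo, cf]
  | cons j js ih =>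
    have hi1 : ∀ i : ι, ∀ a : ZMod p, ∑ l, χ j l * (Pi.single i a : ι → ZMod p) l = a * χ j i := by
      intro i a
      rw [Finset.sum_eq_single i]
      · simp [mul_comm]
      · intro b _ hb; simp [hb]
      · simp
    have hi2 : ∀ i k : ι, ∀ a b : ZMod p,
        ∑ l, χ j l * (Pi.single i a + Pi.single k b : ι → ZMod p) l = a * χ j i + b * χ j k := by
      intro i k a b
      simp only [Pi.add_apply, mul_add, Finset.sum_add_distrib, hi1]
    have hc : ∀ i k, (∑ a : ZMod p, ∑ b : ZMod p,
        co ((2 • D) i) a * co (dec (2 • D) i k) b *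
        (bk (s j (V (dec (2 • D) i) (0 + Pi.single i a)) - s j (V (2 • D) 0))
          (s j (V (dec (dec (2 • D) i) k) (0 + Pi.single i a + Pi.single k b)) -
            s j (V (dec (2 • D) i) (0 + Pi.single i a))) : ZMod p) *
        lin (omTwo s js) (zc ord V (2 * js.length) (dec (dec (2 • D) i) k)
          (0 + Pi.single i a + Pi.single k b))) =
        (∑ a : ZMod p, ∑ b : ZMod p, co ((2 • D) i) a * co (dec (2 • D) i k) b *
        (bk (s j (V (dec (2 • D) i) 0) - s j (V (2 • D) 0) + a * χ j i)
          (s j (V (dec (dec (2 • D) i) k) 0) - s j (V (dec (2 • D) i) 0) + b * χ j k) : ZMod p)) *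
        lin (omTwo s js) (zc ord V (2 * js.length) (dec (dec (2 • D) i) k) 0) := by
      intro i k
      simp only [Finset.sum_mul]
      refine Finset.sum_congr rfl fun a _ => Finset.sum_congr rfl fun b _ => ?_
      rw [hinv js _ _ _ (dec_le' (dec_le' hD i) k), zero_add, hs j _ _ (dec_le' hD i),
        hs j (dec (dec (2 • D) i) k) _ (dec_le' (dec_le' hD i) k), hi1, hi2]
      congr 4
      · ring
      · ring
    rw [List.length_cons, mul_add, mul_one, omTwo_zc]
    simp only [hc]
    rw [sum_pairs hord, cf]
    · refine Finset.sum_congr rfl fun i _ => ?_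
      by_cases hi : D i = 0
      · simp [sg, hi]
      · rw [if_neg hi, dec_self, bk_diag _ (by simp) (by simpa using hi), two_smul_dec,
          ih (dec D i)]
        · have h1 : sg p ord (2 • D) i * sg p ord (dec (2 • D) i) i = 1 := by
            have h2 : dec (2 • D) i i ≠ 0 := by
              rw [dec_self]; simp; omega
            rw [sg, sg, if_neg (by simpa using hi), if_neg h2,
              sum_dec_of_notMem (D := 2 • D) (i := i) _ (by simp), ← pow_add, ← two_mul, pow_mul]
            simp
          rw [h1, one_smul]
        · refine le_trans (fun k => ?_) hD
          have := dec_le D i k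
          simp only [Pi.smul_apply, smul_eq_mul]
          omega
    · intro i k hik
      rw [dec_comm (2 • D) i k]
      congr 1
      rw [dec_of_ne _ hik.symm, dec_of_ne _ hik]
      refine bk_offdiag _ _ (by simp) (by simp) _ _ _ _ _ _ ?_
      ring

/-- The analogue of `omTwo_eval` for `p = 2`, where each factor consumes one step. -/
lemma omOne_eval (hp2 : p = 2) (s : J → E → ZMod p) (χ : J → ι → ZMod p) {ord : ι → ℕ}
    (V : (ι → ℕ) → (ι → ZMod p) → E) (D₀ : ι → ℕ)
    (hs : ∀ j D g, D ≤ D₀ → s j (V D g) = s j (V D 0) + ∑ i, χ j i * g i)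
    (hinv : ∀ js n D g, D ≤ D₀ →
      lin (omOne s js) (zc ord V n D g) = lin (omOne s js) (zc ord V n D 0))
    (js : List J) (D : ι → ℕ) (hD : D ≤ D₀) :
    lin (omOne s js) (zc ord V js.length D 0) = cf χ js D := by
  subst hp2
  induction js generalizing D with
  | nil => simp [zc, omOne, cf]
  | cons j js ih =>
    have hi1 : ∀ i : ι, ∀ a : ZMod 2, ∑ l, χ j l * (Pi.single i a : ι → ZMod 2) l = a * χ j i := by
      intro i a
      rw [Finset.sum_eq_single i]
      · simp [mul_comm]
      · intro b _ hb; simp [hb]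
      · simp
    rw [List.length_cons, omOne_zc, cf]
    refine Finset.sum_congr rfl fun i _ => ?_
    by_cases hi : D i = 0
    · simp [sg, hi]
    · rw [if_neg hi]
      have h1 : sg 2 ord D i = 1 := by
        rw [sg, if_neg hi, ZMod.neg_eq_self_mod_two, one_pow]
      have h3 : ∀ a : ZMod 2, lin (omOne s js) (zc ord V js.length (dec D i) (0 + Pi.single i a)) =
          cf χ js (dec D i) := fun a => by rw [hinv js _ _ _ (dec_le' hD i), ih _ (dec_le' hD i)]
      have h4 : ∀ a : ZMod 2, s j (V (dec D i) (0 + Pi.single i a)) =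
          s j (V (dec D i) 0) + a * χ j i := fun a => by
        rw [hs j _ _ (dec_le' hD i), zero_add, hi1]
      simp only [h1, one_mul, h3, h4, ← Finset.sum_mul]
      congr 1
      exact sum_co_two _ _ _ _

/-- Above the top weight, no monomial occurs in the product. -/
lemma cf_eq_zero (χ : J → ι → ZMod p) (lead : J → ι) (rank : ι → ℕ)
    (h : ∀ j i, χ j i ≠ 0 → i = lead j ∨ rank i < rank (lead j)) (js : List J) (D : ι → ℕ)
    (hl : ∑ i, D i = js.length)
    (hD : (js.map fun j => rank (lead j)).sum < ∑ i, D i * rank i) : cf χ js D = 0 := by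
  induction js generalizing D with
  | nil =>
    have : ∀ i, D i = 0 := by simpa using hl
    simp [this] at hD
  | cons j js ih =>
    rw [cf]
    refine Finset.sum_eq_zero fun i _ => ?_
    split_ifs with hi
    · rfl
    by_cases hχ : χ j i = 0
    · rw [hχ, zero_mul]
    have hr : rank i ≤ rank (lead j) := by
      rcases h j i hχ with h | h
      · rw [h]
      · exact h.le
    rw [ih, mul_zero]
    · have := sum_dec hi Finset.univ (Finset.mem_univ i)
      simp at hl
      omega
    · rw [List.map_cons, List.sum_cons] at hD
      have : ∑ k, dec D i k * rank k + rank i = ∑ k, D k * rank k := by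
        rw [← Finset.add_sum_erase _ _ (Finset.mem_univ i),
          ← Finset.add_sum_erase _ (fun k => D k * rank k) (Finset.mem_univ i), dec_self,
          Finset.sum_congr rfl fun k hk => by rw [dec_of_ne D (Finset.ne_of_mem_erase hk)]]
        obtain ⟨x, hx⟩ := Nat.exists_eq_succ_of_ne_zero hi
        rw [hx]
        simp
        ring
      omega

/-- The product of the leading terms is a nonzero monomial. -/
lemma cf_ne_zero (χ : J → ι → ZMod p) (lead : J → ι) (rank : ι → ℕ)
    (h0 : ∀ j, χ j (lead j) ≠ 0)
    (h : ∀ j i, χ j i ≠ 0 → i = lead j ∨ rank i < rank (lead j)) (js : List J) :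
    cf χ js (fun i => (js.map lead).count i) ≠ 0 := by
  induction js with
  | nil => simp [cf]
  | cons j js ih =>
    have hsum : ∀ js : List J, ∑ i, (js.map lead).count i = js.length := by
      intro js
      induction js with
      | nil => simp
      | cons j js ih => simp [List.count_cons, Finset.sum_add_distrib, ih]
    have hw : ∀ js : List J, ∑ i, (js.map lead).count i * rank i =
        (js.map fun j => rank (lead j)).sum := by
      intro js
      induction js with
      | nil => simp
      | cons j js ih =>
        simp [List.count_cons, Finset.sum_add_distrib, ih, add_mul]
        ring
    have hdec : dec (fun i => ((j :: js).map lead).count i) (lead j) =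
        fun i => (js.map lead).count i := by
      ext k
      by_cases hk : k = lead j
      · subst hk; simp [dec_self]
      · simp [dec_of_ne _ hk, List.count_cons, Ne.symm hk]
    rw [cf, Finset.sum_eq_single (lead j)]
    · rw [if_neg (by simp), hdec]
      exact mul_ne_zero (h0 j) ih
    · intro i _ hi
      split_ifs with hD
      · rfl
      by_cases hχ : χ j i = 0
      · rw [hχ, zero_mul]
      have hr : rank i < rank (lead j) := (h j i hχ).resolve_left hi
      rw [cf_eq_zero χ lead rank h, mul_zero]
      · have h1 := sum_dec (D := fun i => ((j :: js).map lead).count i) hD Finset.univ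
          (Finset.mem_univ i)
        have h2 := hsum (j :: js)
        rw [List.length_cons] at h2
        omega
      · have : ∑ k, dec (fun i => ((j :: js).map lead).count i) i k * rank k + rank i =
            ∑ k, ((j :: js).map lead).count k * rank k := by
          rw [← Finset.add_sum_erase _ _ (Finset.mem_univ i),
            ← Finset.add_sum_erase _ (fun k => ((j :: js).map lead).count k * rank k)
              (Finset.mem_univ i), dec_self,
            Finset.sum_congr rfl fun k hk => by rw [dec_of_ne _ (Finset.ne_of_mem_erase hk)]]
          obtain ⟨x, hx⟩ := Nat.exists_eq_succ_of_ne_zero hD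
          rw [hx]
          simp
          ring
        have h3 := hw (j :: js)
        have h4 : ((j :: js).map fun j => rank (lead j)).sum =
            rank (lead j) + (js.map fun j => rank (lead j)).sum := by simp
        omega
    · simp

end Evaluation

/-! ### Labels from complex arguments -/

section Labels
variable {p : ℕ} [Fact p.Prime]

/-- The sector of a complex number, if the plane is cut into `p` equal sectors. -/
def lab (p : ℕ) (w : ℂ) : ZMod p := ((⌊(p : ℝ) * (w.arg / (2 * Real.pi))⌋ : ℤ) : ZMod p)

lemma two_pi_pos' : 0 < 2 * Real.pi := by positivity

lemma arg_mul_int {z w : ℂ} (hz : z ≠ 0) (hw : w ≠ 0) :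
    ∃ k : ℤ, (z * w).arg = z.arg + w.arg + 2 * Real.pi * k := by
  have h := Complex.arg_mul_coe_angle hz hw
  rw [← Real.Angle.coe_add, Real.Angle.angle_eq_iff_two_pi_dvd_sub] at h
  obtain ⟨k, hk⟩ := h
  exact ⟨k, by linarith⟩

lemma stdAddChar_arg (a : ZMod p) :
    ∃ k : ℤ, (p : ℝ) * ((ZMod.stdAddChar a : ℂ).arg / (2 * Real.pi)) = (a.val : ℝ) + p * k := by
  have hp0 : (p : ℝ) ≠ 0 := by exact_mod_cast (Fact.out : p.Prime).ne_zero
  have h1 : (ZMod.stdAddChar a : ℂ) =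
      Complex.exp (((2 * Real.pi * (a.val : ℝ) / p : ℝ) : ℂ) * Complex.I) := by
    have := ZMod.stdAddChar_coe (N := p) (a.val : ℤ)
    rw [Int.cast_natCast, ZMod.natCast_zmod_val] at this
    rw [this]
    congr 1
    push_cast
    ring
  have h2 : (((ZMod.stdAddChar a : ℂ).arg : ℝ) : Real.Angle) =
      ((2 * Real.pi * (a.val : ℝ) / p : ℝ) : Real.Angle) := by
    rw [h1, Complex.arg_exp_mul_I, Real.Angle.coe_toIocMod]
  rw [Real.Angle.angle_eq_iff_two_pi_dvd_sub] at h2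
  obtain ⟨k, hk⟩ := h2
  refine ⟨k, ?_⟩
  have hpi := Real.pi_ne_zero
  have : (ZMod.stdAddChar a : ℂ).arg = 2 * Real.pi * k + 2 * Real.pi * (a.val : ℝ) / p := by
    linarith
  rw [this]
  field_simp
  ring

lemma stdAddChar_ne_zero (a : ZMod p) : (ZMod.stdAddChar a : ℂ) ≠ 0 := by
  intro h
  have := (ZMod.stdAddChar (N := p)).map_add_eq_mul a (-a)
  rw [h] at this
  simp at this

/-- Multiplication by a `p`-th root of unity rotates the sectors. -/
lemma lab_mul (a : ZMod p) {w : ℂ} (hw : w ≠ 0) :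
    lab p (ZMod.stdAddChar a * w) = lab p w + a := by
  obtain ⟨k, hk⟩ := arg_mul_int (stdAddChar_ne_zero a) hw
  obtain ⟨l, hl⟩ := stdAddChar_arg a
  have hpi := Real.pi_ne_zero
  have : (p : ℝ) * ((ZMod.stdAddChar a * w).arg / (2 * Real.pi)) =
      (p : ℝ) * (w.arg / (2 * Real.pi)) + ((a.val + p * l + p * k : ℤ) : ℝ) := by
    rw [hk, add_div, add_div, mul_add, mul_add, hl]
    push_cast
    field_simp
    ring
  rw [lab, this, Int.floor_add_intCast, lab]
  push_cast
  simp

/-- Nearby complex numbers lie in at most two sectors, which are adjacent. -/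
lemma exists_lab_near (p : ℕ) [Fact p.Prime] : ∃ ε : ℝ, 0 < ε ∧ ε ≤ 1 ∧ ∀ w : ℂ, w ≠ 0 →
    ∃ a : ZMod p, ∀ w' : ℂ, ‖w' - w‖ < ε * ‖w‖ → lab p w' = a ∨ lab p w' = a + 1 := by
  have hp0 : (0 : ℝ) < p := by exact_mod_cast (Fact.out : p.Prime).pos
  have hc : ContinuousAt Complex.arg 1 := Complex.continuousAt_arg (by simp)
  obtain ⟨ε, hε, h⟩ := Metric.continuousAt_iff.1 hc (Real.pi / p) (by positivity)
  refine ⟨min ε 1, by positivity, min_le_right _ _, fun w hw => ?_⟩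
  -- close numbers differ by less than half a sector
  refine ⟨((⌊(p : ℝ) * (w.arg / (2 * Real.pi)) - 1 / 2⌋ : ℤ) : ZMod p), fun w' hw' => ?_⟩
  have hw0 : 0 < ‖w‖ := norm_pos_iff.2 hw
  have h1 : ‖w' / w - 1‖ < min ε 1 := by
    rw [div_sub_one hw, norm_div, div_lt_iff₀ hw0]
    exact hw'
  have hz : w' / w ≠ 0 := by
    intro h0
    rw [h0] at h1
    simp at h1
  have h2 := h (x := w' / w) (by rw [dist_eq_norm]; exact lt_of_lt_of_le h1 (min_le_left _ _))
  rw [Complex.arg_one, dist_zero_right, Real.norm_eq_abs] at h2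
  obtain ⟨k, hk⟩ := arg_mul_int hz hw
  rw [div_mul_cancel₀ _ hw] at hk
  set t := (p : ℝ) * ((w' / w).arg / (2 * Real.pi)) with ht
  have hpi := Real.pi_pos
  have ht2 : |t| < 1 / 2 := by
    rw [ht, abs_mul, abs_div, abs_of_pos hp0, abs_of_pos two_pi_pos', ← mul_div_assoc,
      div_lt_iff₀ two_pi_pos']
    rw [lt_div_iff₀ hp0] at h2
    linarith
  set x := (p : ℝ) * (w.arg / (2 * Real.pi)) with hx
  have h3 : (p : ℝ) * (w'.arg / (2 * Real.pi)) = (x + t) + ((p * k : ℤ) : ℝ) := by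
    rw [hk, ht, hx]
    push_cast
    field_simp
    ring
  rw [lab, h3, Int.floor_add_intCast]
  push_cast
  simp only [CharP.cast_eq_zero, zero_mul, add_zero]
  rw [abs_lt] at ht2
  have h4 : ⌊x - 1 / 2⌋ ≤ ⌊x + t⌋ := Int.floor_le_floor (by linarith)
  have h5 : ⌊x + t⌋ ≤ ⌊x - 1 / 2⌋ + 1 := by
    rw [← Int.floor_add_one]
    exact Int.floor_le_floor (by linarith)
  have h6 : ⌊x + t⌋ = ⌊x - 1 / 2⌋ ∨ ⌊x + t⌋ = ⌊x - 1 / 2⌋ + 1 := by omega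
  rcases h6 with h6 | h6
  · left; rw [h6]
  · right; rw [h6]; push_cast; rfl

/-- Real numbers that are close relative to their size have the same sign, hence the same label. -/
lemma lab_real {w w' : ℂ} (hw : w.im = 0) (hw' : w'.im = 0) (h : ‖w' - w‖ < ‖w‖) :
    lab p w' = lab p w := by
  obtain ⟨x, rfl⟩ : ∃ x : ℝ, w = x := ⟨w.re, Complex.ext rfl (by simpa using hw)⟩
  obtain ⟨y, rfl⟩ : ∃ y : ℝ, w' = y := ⟨w'.re, Complex.ext rfl (by simpa using hw')⟩
  rw [← Complex.ofReal_sub, Complex.norm_real, Complex.norm_real, Real.norm_eq_abs,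
    Real.norm_eq_abs] at h
  rcases lt_or_ge x 0 with hx | hx
  · have hy : y < 0 := by
      rw [abs_of_neg hx] at h
      have := le_abs_self (y - x)
      linarith
    rw [lab, lab, Complex.arg_ofReal_of_neg hx, Complex.arg_ofReal_of_neg hy]
  · have hy : 0 ≤ y := by
      rw [abs_of_nonneg hx] at h
      have := neg_abs_le (y - x)
      linarith
    rw [lab, lab, Complex.arg_ofReal_of_nonneg hx, Complex.arg_ofReal_of_nonneg hy]

/-- A free action admits an equivariant labelling by group elements (choose orbit
representatives). -/
lemma exists_label {E Γ : Type*} [AddCommGroup Γ] (act : Γ → E → E)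
    (act_add : ∀ g h x, act g (act h x) = act (g + h) x) (act_zero : ∀ x, act 0 x = x)
    (P : Set E) (hP : ∀ g, ∀ x ∈ P, act g x ∈ P) (free : ∀ x ∈ P, ∀ g, act g x = x → g = 0) :
    ∃ t : E → Γ, ∀ x ∈ P, ∀ g, t (act g x) = t x + g := by
  classical
  let S : Setoid E :=
    { r := fun x y => ∃ g, act g x = y
      iseqv := ⟨fun x => ⟨0, act_zero x⟩,
        fun {x y} ⟨g, hg⟩ => ⟨-g, by rw [← hg, act_add, neg_add_cancel, act_zero]⟩,
        fun {x y z} ⟨g, hg⟩ ⟨h, hh⟩ => ⟨h + g, by rw [← act_add, hg, hh]⟩⟩ }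
  let r : E → E := fun x => (Quotient.mk S x).out
  have hr : ∀ x, ∃ g, act g (r x) = x := fun x => Quotient.exact (Quotient.out_eq (Quotient.mk S x))
  choose t ht using hr
  refine ⟨t, fun x hx g => ?_⟩
  have h1 : r (act g x) = r x := by
    have : Quotient.mk S (act g x) = Quotient.mk S x :=
      Quotient.sound (s := S) ⟨-g, by rw [act_add, neg_add_cancel, act_zero]⟩
    simp only [r, this]
  have hrP : r x ∈ P := by
    have : r x = act (-t x) x := by
      have h := congrArg (act (-t x)) (ht x)
      rwa [act_add, neg_add_cancel, act_zero] at h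
    rw [this]
    exact hP _ _ hx
  have h2 := ht (act g x)
  rw [h1] at h2
  have h3 : act (-(t x + g) + t (act g x)) (r x) = r x := by
    have h := congrArg (act (-(t x + g))) (congrArg (act g) (ht x))
    rw [act_add, act_add, show -(t x + g) + g + t x = 0 by abel, act_zero] at h
    rw [← act_add, h2, ← h]
  have h4 := free _ hrP _ h3
  exact (neg_add_eq_zero.1 h4).symm

end Labels

/-! ### A Borsuk–Ulam theorem for elementary abelian groups -/

section BorsukUlam
variable {p : ℕ} [Fact p.Prime] {J : Type*} {ι : Type*} [Fintype ι] [DecidableEq ι]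
  {E : Type*} [NormedAddCommGroup E] [NormedSpace ℝ E]

/-- The degree of the Euler class of a nontrivial character: real line bundles for `p = 2`, complex
line bundles otherwise. -/
def qq (p : ℕ) : ℕ := if p = 2 then 1 else 2

/-- Equivariant labels yield an invariant cocycle that pairs with the cycle `zc` to the coefficient
`cf`, and that vanishes on simplices for which some label is almost constant. -/
theorem exists_cochain (χ : J → ι → ZMod p) (act : (ι → ZMod p) → E →ₗ[ℝ] E) (P : Set E)
    (s : J → E → ZMod p) (hs : ∀ j g, ∀ x ∈ P, s j (act g x) = s j x + ∑ i, χ j i * g i)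
    {ord : ι → ℕ} (hord : Function.Injective ord) (V : (ι → ℕ) → (ι → ZMod p) → E) (D₀ : ι → ℕ)
    (hV : ∀ D g h, D ≤ D₀ → act h (V D g) = V D (g + h))
    (hz : ∀ n D g, D ≤ D₀ → zc ord V n D g ∈
      Sup (ZMod p) (fun l : List E => l.length = n + 1 ∧ hull l ⊆ P)) (js : List J) :
    ∃ ω : Ch (ZMod p) E →ₗ[ZMod p] ZMod p, Inv act P ω ∧ (∀ c, ω (bd (ZMod p) E c) = 0) ∧
      (∀ l, ω (Finsupp.single l 1) ≠ 0 → l ≠ [] ∧ ∀ j ∈ js, ∀ a,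
        ¬ ∀ x ∈ l, s j x = a ∨ (p ≠ 2 ∧ s j x = a + 1)) ∧
      ∀ D, qq p • D ≤ D₀ → ω (zc ord V (qq p * js.length) (qq p • D) 0) = cf χ js D := by
  have hVP : ∀ D g, D ≤ D₀ → V D g ∈ P := by
    intro D g hD
    have h := hz 0 D g hD
    rw [zc, cone_single, Sup, Finsupp.mem_supported] at h
    have h' := h (show [V D g] ∈ _ by simp)
    exact h'.2 (subset_hull (by simp))
  have hs' : ∀ j D g, D ≤ D₀ → s j (V D g) = s j (V D 0) + ∑ i, χ j i * g i := by
    intro j D g hD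
    rw [← hs j g _ (hVP D 0 hD), hV D 0 g hD, zero_add]
  -- pairings with invariant functionals do not see the group element
  have hinv : ∀ η : Ch (ZMod p) E →ₗ[ZMod p] ZMod p, Inv act P η → ∀ n D g, D ≤ D₀ →
      η (zc ord V n D g) = η (zc ord V n D 0) := by
    intro η hη n D g hD
    have h1 := zc_map ord V (act g) g D₀ (fun D' g' hD' => hV D' g' g hD') n D hD 0
    rw [zero_add] at h1
    rw [← h1]
    exact eq_of_Sup (η ∘ₗ mapCh (act g)) η (fun l hl => by simpa using hη g l hl.2) (hz n D 0 hD)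
  by_cases hp2 : p = 2
  · have hI : ∀ js, Inv act P (lin (omOne s js)) := by
      intro js g l hl
      simpa using omOne_map s (act g) (fun j => ∑ i, χ j i * g i) js l
        fun j x hx => hs j g x (hl (subset_hull hx))
    refine ⟨lin (omOne s js), hI js, lin_bd_of_bdL (omOne_bd s js), ?_, ?_⟩
    · intro l hl
      simp only [Finsupp.linearCombination_single, one_smul] at hl
      refine ⟨?_, fun j hj a hall => omOne_supp s js l hl j hj a ?_⟩
      · rintro rfl
        cases js <;> simp [omOne] at hl
      · intro x hx
        rcases hall x hx with h | h
        · exact h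
        · exact absurd hp2 h.1
    · intro D hD
      simp only [qq, hp2, if_true, one_smul, one_mul] at hD ⊢
      exact omOne_eval hp2 s χ V D₀ hs' (fun js => hinv _ (hI js)) js D hD
  · have hI : ∀ js, Inv act P (lin (omTwo s js)) := by
      intro js g l hl
      simpa using omTwo_map s (act g) (fun j => ∑ i, χ j i * g i) js l
        fun j x hx => hs j g x (hl (subset_hull hx))
    refine ⟨lin (omTwo s js), hI js, lin_bd_of_bdL (omTwo_bd s js), ?_, ?_⟩
    · intro l hl
      simp only [Finsupp.linearCombination_single, one_smul] at hl
      refine ⟨?_, fun j hj a hall => omTwo_supp hp2 s js l hl j hj a ?_⟩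
      · rintro rfl
        cases js <;> simp [omTwo] at hl
      · intro x hx
        exact (hall x hx).imp_right And.right
    · intro D hD
      simp only [qq, hp2, if_false] at hD ⊢
      exact omTwo_eval s χ hord V D₀ hs' (fun js => hinv _ (hI js)) js D hD

/-- A Borsuk–Ulam theorem for elementary abelian groups: functions transforming by characters
`χ j` have a common zero as soon as the product of the linear forms `χ j` has a nonzero leading
monomial that is detected by the cycle `zc`. -/
theorem borsuk_ulam [Fintype J] (χ : J → ι → ZMod p) (lead : J → ι) (rank : ι → ℕ)
    (h0 : ∀ j, χ j (lead j) ≠ 0)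
    (hlead : ∀ j i, χ j i ≠ 0 → i = lead j ∨ rank i < rank (lead j))
    (act : (ι → ZMod p) → E →ₗ[ℝ] E)
    (act_add : ∀ g h x, act g (act h x) = act (g + h) x) (act_zero : ∀ x, act 0 x = x)
    (P : Set E) (hPc : IsCompact P)
    (hP : ∀ g, ∀ x ∈ P, act g x ∈ P) (free : ∀ x ∈ P, ∀ g, act g x = x → g = 0)
    {ord : ι → ℕ} (hord : Function.Injective ord) (V : (ι → ℕ) → (ι → ZMod p) → E) (D₀ : ι → ℕ)
    (hD₀ : ∀ i, D₀ i = qq p * ((Finset.univ.toList.map lead).count i))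
    (hV : ∀ D g h, D ≤ D₀ → act h (V D g) = V D (g + h))
    (hz : ∀ n D g, D ≤ D₀ → zc ord V n D g ∈
      Sup (ZMod p) (fun l : List E => l.length = n + 1 ∧ hull l ⊆ P))
    (φ : J → E → ℂ) (hφc : ∀ j, ContinuousOn (φ j) P)
    (hφ : ∀ j, ∀ x ∈ P, ∀ g, φ j (act g x) = ZMod.stdAddChar (∑ i, χ j i * g i) * φ j x)
    (hreal : p = 2 → ∀ j, ∀ x ∈ P, (φ j x).im = 0) :
    ∃ x ∈ P, ∀ j, φ j x = 0 := by
  classical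
  set js : List J := Finset.univ.toList with hjs
  have hVP : V 0 0 ∈ P := by
    have h := hz 0 0 0 (fun _ => Nat.zero_le _)
    rw [zc, cone_single, Sup, Finsupp.mem_supported] at h
    have h' := h (show [V 0 0] ∈ _ by simp)
    exact h'.2 (subset_hull (by simp))
  by_contra! hcon
  -- the common zero set is empty, so the sum of the absolute values is bounded below
  have hcont : ContinuousOn (fun x => ∑ j, ‖φ j x‖) P :=
    continuousOn_finsetSum _ fun j _ => (hφc j).norm
  obtain ⟨x₀, hx₀, hmin⟩ := hPc.exists_isMinOn ⟨_, hVP⟩ hcont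
  set c := ∑ j, ‖φ j x₀‖ with hc
  have hcpos : 0 < c := by
    obtain ⟨j, hj⟩ := hcon x₀ hx₀
    exact lt_of_lt_of_le (norm_pos_iff.2 hj)
      (Finset.single_le_sum (f := fun j => ‖φ j x₀‖) (fun j _ => norm_nonneg _) (Finset.mem_univ j))
  obtain ⟨ε, hε, hε1, hnear⟩ := exists_lab_near p
  set η := c * ε / (Fintype.card J + 1) with hη
  have hηpos : 0 < η := by positivity
  have hunif : ∀ j, ∃ δ > 0, ∀ x ∈ P, ∀ y ∈ P, dist x y < δ → dist (φ j x) (φ j y) < η := by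
    intro j
    have := hPc.uniformContinuousOn_of_continuous (hφc j)
    exact Metric.uniformContinuousOn_iff.1 this η hηpos
  choose δ hδ hδ' using hunif
  obtain ⟨δ₀, hδ₀, hδ₀'⟩ : ∃ δ₀ > 0, ∀ j, δ₀ ≤ δ j := by
    rcases isEmpty_or_nonempty J with hJ | hJ
    · exact ⟨1, one_pos, fun j => isEmptyElim j⟩
    · obtain ⟨j, hj⟩ := Finite.exists_min δ
      exact ⟨δ j, hδ j, hj⟩
  obtain ⟨t, ht⟩ := exists_label (fun g x => act g x) act_add act_zero P hP free
  -- sectors are equivariant labels away from the zeros of `φ j`; orbit labels take over there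
  let s : J → E → ZMod p := fun j x => if φ j x = 0 then ∑ i, χ j i * t x i else lab p (φ j x)
  have hs : ∀ j g, ∀ x ∈ P, s j (act g x) = s j x + ∑ i, χ j i * g i := by
    intro j g x hx
    by_cases hzero : φ j x = 0
    · have : φ j (act g x) = 0 := by rw [hφ j x hx, hzero, mul_zero]
      simp only [s, hzero, this, if_true]
      rw [ht x hx g, ← Finset.sum_add_distrib]
      simp [mul_add]
    · have : φ j (act g x) ≠ 0 := by
        rw [hφ j x hx]; exact mul_ne_zero (stdAddChar_ne_zero _) hzero
      simp only [s, hzero, this, if_false]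
      rw [hφ j x hx, lab_mul _ hzero]
  obtain ⟨ω, hωI, hωb, hωs, hωe⟩ := exists_cochain χ act P s hs hord V D₀ hV hz js
  have hsum : ∀ js : List J, ∑ i, (js.map lead).count i = js.length := by
    intro js
    induction js with
    | nil => simp
    | cons j js ih => simp [List.count_cons, Finset.sum_add_distrib, ih]
  have hD₀' : D₀ = qq p • fun i => (js.map lead).count i := by
    ext i; simp [hD₀]
  have hne : ω (zc ord V (qq p * js.length) D₀ 0) ≠ 0 := by
    conv in D₀ => rw [hD₀']
    rw [hωe _ hD₀'.ge]
    exact cf_ne_zero χ lead rank h0 hlead js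
  have hlen : js.length ≠ 0 := by
    obtain ⟨j, hj⟩ := hcon x₀ hx₀
    have : j ∈ js := by simp [hjs]
    exact fun h => by simp [List.length_eq_zero_iff.1 h] at this
  have hq0 : qq p ≠ 0 := by unfold qq; split_ifs <;> simp
  obtain ⟨n, hn⟩ := Nat.exists_eq_succ_of_ne_zero (mul_ne_zero hq0 hlen)
  have hDsum : ∑ i, D₀ i = n + 1 := by
    rw [hD₀']
    simp only [Pi.smul_apply, smul_eq_mul, ← Finset.mul_sum, hsum]
    exact hn
  rw [hn] at hne
  -- `zc` is a cycle modulo the action, as the coefficients `co` sum to zero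
  have hzb : ∀ η : Ch (ZMod p) E →ₗ[ZMod p] ZMod p, Inv act P η →
      η (bd (ZMod p) E (zc ord V (n + 1) D₀ 0)) = 0 := by
    intro η hη
    have hinv : ∀ D g, D ≤ D₀ → η (zc ord V n D g) = η (zc ord V n D 0) := by
      intro D g hD
      have h1 := zc_map ord V (act g) g D₀ (fun D' g' hD' => hV D' g' g hD') n D hD 0
      rw [zero_add] at h1
      rw [← h1]
      exact eq_of_Sup (η ∘ₗ mapCh (act g)) η (fun l hl => by simpa using hη g l hl.2) (hz n D 0 hD)
    rw [bd_zc_succ hord V n D₀ 0 hDsum, yc]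
    simp only [map_sum, map_smul, smul_eq_mul]
    refine Finset.sum_eq_zero fun i _ => ?_
    have : ∀ a : ZMod p, η (zc ord V n (dec D₀ i) (0 + Pi.single i a)) =
        η (zc ord V n (dec D₀ i) 0) := fun a => hinv _ _ (dec_le' le_rfl i)
    simp only [this, mul_assoc]
    rw [← Finset.mul_sum, ← Finset.sum_mul, sum_co, zero_mul, mul_zero]
  obtain ⟨l, hl, hlP, hlδ⟩ := exists_small hPc.isBounded ω hωI hωb (n + 1) _
    (Sup.mono (fun l hl => ⟨hl.1.le, hl.2⟩) (hz (n + 1) D₀ 0 le_rfl)) hzb hne hδ₀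
  obtain ⟨hl0, hlj⟩ := hωs l hl
  obtain ⟨x, hx⟩ := List.exists_mem_of_ne_nil l hl0
  -- every function is small at `x`
  have hsmall : ∀ j, ‖φ j x‖ ≤ η / ε := by
    intro j
    by_contra! hbig
    rw [div_lt_iff₀ hε, mul_comm] at hbig
    have hd : ∀ y ∈ l, ‖φ j y - φ j x‖ < ε * ‖φ j x‖ := by
      intro y hy
      rw [← dist_eq_norm]
      exact (hδ' j y (hlP y hy) x (hlP x hx) ((hlδ y hy x hx).trans_le (hδ₀' j))).trans hbig
    have hnz : ∀ y ∈ l, φ j y ≠ 0 := by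
      intro y hy h
      have := hd y hy
      rw [h, zero_sub, norm_neg] at this
      nlinarith [norm_nonneg (φ j x)]
    have hsl : ∀ y ∈ l, s j y = lab p (φ j y) := fun y hy => by simp [s, hnz y hy]
    by_cases hp2 : p = 2
    · refine hlj j (by simp [hjs]) (lab p (φ j x)) fun y hy => Or.inl ?_
      rw [hsl y hy]
      refine lab_real (hreal hp2 j x (hlP x hx)) (hreal hp2 j y (hlP y hy)) ?_
      have := hd y hy
      nlinarith [norm_nonneg (φ j x)]
    · obtain ⟨a, ha⟩ := hnear (φ j x) (hnz x hx)
      refine hlj j (by simp [hjs]) a fun y hy => ?_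
      rw [hsl y hy]
      exact (ha _ (hd y hy)).imp_right fun h => ⟨hp2, h⟩
  have h1 : c ≤ ∑ j, ‖φ j x‖ := hmin (hlP x hx)
  have h2 : ∑ j, ‖φ j x‖ ≤ Fintype.card J * (η / ε) := by
    refine (Finset.sum_le_sum fun j _ => hsmall j).trans ?_
    simp
  have h3 : η / ε = c / (Fintype.card J + 1) := by
    rw [hη]; field_simp
  rw [h3] at h2
  have h4 : (Fintype.card J : ℝ) * (c / (Fintype.card J + 1)) < c := by
    rw [← mul_div_assoc, div_lt_iff₀ (by positivity)]
    nlinarith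
  linarith

end BorsukUlam

/-! ### Products of joins -/

section Joins
variable {p : ℕ} [Fact p.Prime] {K : Type*} [Fintype K] [DecidableEq K] {e n : K → ℕ}

/-- The ambient space of a product of chessboard-like joins: for every `k`, weights indexed by
`n k + 1` join coordinates and by the elements of the group `(ZMod p) ^ (e k)`. -/
abbrev EE (p : ℕ) (e n : K → ℕ) : Type _ := ∀ k : K, Fin (n k + 1) → (Fin (e k) → ZMod p) → ℝ

/-- The component of `g` in the group with index `k`. -/
def gr (g : (Σ k, Fin (e k)) → ZMod p) (k : K) : Fin (e k) → ZMod p := fun i => g ⟨k, i⟩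

lemma gr_add (g h : (Σ k, Fin (e k)) → ZMod p) (k : K) : gr (g + h) k = gr g k + gr h k := rfl

/-- The translation action on the weights. -/
def actE (g : (Σ k, Fin (e k)) → ZMod p) : EE p e n →ₗ[ℝ] EE p e n where
  toFun x k c h := x k c (h - gr g k)
  map_add' _ _ := rfl
  map_smul' _ _ := rfl

lemma actE_apply (g : (Σ k, Fin (e k)) → ZMod p) (x : EE p e n) (k : K) (c : Fin (n k + 1))
    (h : Fin (e k) → ZMod p) : actE g x k c h = x k c (h - gr g k) := rfl

/-- The product over `k` of the `(n k + 1)`-fold joins of the discrete groups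
`(ZMod p) ^ (e k)`. -/
def PP (p : ℕ) [Fact p.Prime] (e n : K → ℕ) : Set (EE p e n) :=
  {x | (∀ k c h, 0 ≤ x k c h) ∧ (∀ k, ∑ c, ∑ h, x k c h = 1) ∧
    ∀ k c h h', h ≠ h' → x k c h * x k c h' = 0}

lemma PP.le_one {x : EE p e n} (hx : x ∈ PP p e n) (k : K) (c : Fin (n k + 1))
    (h : Fin (e k) → ZMod p) : x k c h ≤ 1 := by
  rw [← hx.2.1 k]
  refine (Finset.single_le_sum (f := fun h => x k c h) (fun h _ => hx.1 k c h)
    (Finset.mem_univ h)).trans ?_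
  exact Finset.single_le_sum (f := fun c => ∑ h, x k c h)
    (fun c _ => Finset.sum_nonneg fun h _ => hx.1 k c h) (Finset.mem_univ c)

lemma PP.isCompact : IsCompact (PP p e n) := by
  refine Metric.isCompact_of_isClosed_isBounded ?_ ?_
  · simp only [PP, Set.ofPred_and, Set.ofPred_forall]
    refine IsClosed.inter ?_ (IsClosed.inter ?_ ?_)
    · exact isClosed_iInter fun k => isClosed_iInter fun c => isClosed_iInter fun h =>
        isClosed_le (by fun_prop) (by fun_prop)
    · exact isClosed_iInter fun k => isClosed_eq (by fun_prop) (by fun_prop)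
    · exact isClosed_iInter fun k => isClosed_iInter fun c => isClosed_iInter fun h =>
        isClosed_iInter fun h' => isClosed_iInter fun _ => isClosed_eq (by fun_prop) (by fun_prop)
  · refine (Metric.isBounded_closedBall (x := (0 : EE p e n)) (r := 1)).subset fun x hx => ?_
    rw [mem_closedBall_zero_iff, pi_norm_le_iff_of_nonneg zero_le_one]
    intro k
    rw [pi_norm_le_iff_of_nonneg zero_le_one]
    intro c
    rw [pi_norm_le_iff_of_nonneg zero_le_one]
    intro h
    rw [Real.norm_eq_abs, abs_of_nonneg (hx.1 k c h)]
    exact PP.le_one hx k c h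

lemma PP.act_mem (g : (Σ k, Fin (e k)) → ZMod p) (x : EE p e n) (hx : x ∈ PP p e n) :
    actE g x ∈ PP p e n := by
  refine ⟨fun k c h => hx.1 _ _ _, fun k => ?_, fun k c h h' hh => hx.2.2 k c _ _ ?_⟩
  · rw [← hx.2.1 k]
    refine Finset.sum_congr rfl fun c _ => ?_
    exact Fintype.sum_equiv (Equiv.subRight (gr g k)) _ _ fun h => rfl
  · exact fun h => hh (sub_left_inj.1 h)

lemma PP.free (x : EE p e n) (hx : x ∈ PP p e n) (g : (Σ k, Fin (e k)) → ZMod p)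
    (h : actE g x = x) : g = 0 := by
  have key : ∀ k, gr g k = 0 := by
    intro k
    obtain ⟨c, -, hc⟩ := Finset.exists_ne_zero_of_sum_ne_zero
      (show ∑ c, ∑ h, x k c h ≠ 0 by rw [hx.2.1 k]; exact one_ne_zero)
    obtain ⟨y, -, hy⟩ := Finset.exists_ne_zero_of_sum_ne_zero hc
    -- a fixed point has equal weights at `y` and at a translate of `y` in the same join coordinate
    have h1 : x k c (y - gr g k) = x k c y := by
      have := congrFun (congrFun (congrFun h k) c) y
      rwa [actE_apply] at this
    by_contra hg
    have h2 := hx.2.2 k c (y - gr g k) y (by simpa using hg)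
    rw [h1] at h2
    exact hy (mul_self_eq_zero.1 h2)
  ext ⟨k, i⟩
  exact congrFun (key k) i

/-- The vertex of the product of joins whose `k`-th component is the group element `g k` in the
join coordinate determined by the total degree of `D` at `k`. -/
def VV (D : (Σ k, Fin (e k)) → ℕ) (g : (Σ k, Fin (e k)) → ZMod p) : EE p e n :=
  fun k c h => if (c : ℕ) + ∑ i, D ⟨k, i⟩ = n k ∧ h = gr g k then 1 else 0

lemma actE_VV (D : (Σ k, Fin (e k)) → ℕ) (g h : (Σ k, Fin (e k)) → ZMod p) :
    actE h (VV D g : EE p e n) = VV D (g + h) := by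
  ext k c y
  rw [actE_apply, VV, VV, gr_add]
  exact if_congr (by rw [sub_eq_iff_eq_add]) rfl rfl

/-- One vertex precedes another if its degrees dominate, and if the group components agree
wherever the total degrees do. -/
def Rl (x y : ((Σ k, Fin (e k)) → ℕ) × ((Σ k, Fin (e k)) → ZMod p)) : Prop :=
  y.1 ≤ x.1 ∧ ∀ k, ∑ i, x.1 ⟨k, i⟩ = ∑ i, y.1 ⟨k, i⟩ → gr x.2 k = gr y.2 k

/-- The simplices of `zc` lie in the product of joins: along a path the group component at `k`
changes only together with the join coordinate at `k`. -/
lemma zc_mem_PP (ord : (Σ k, Fin (e k)) → ℕ) (D₀ : (Σ k, Fin (e k)) → ℕ)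
    (hD₀ : ∀ k, ∑ i, D₀ ⟨k, i⟩ ≤ n k) (m : ℕ) (D : (Σ k, Fin (e k)) → ℕ) (hD : D ≤ D₀)
    (g : (Σ k, Fin (e k)) → ZMod p) :
    zc ord (VV : _ → _ → EE p e n) m D g ∈
      Sup (ZMod p) (fun l : List (EE p e n) => l.length = m + 1 ∧ hull l ⊆ PP p e n) := by
  refine Sup.mono ?_ (zc_mem_Sup ord VV Rl ?_ ?_ ?_ m D g)
  · rintro l ⟨h1, l', rfl, h2, h3⟩
    refine ⟨h1, ?_⟩
    let Q : Set (EE p e n) := {x | (∀ k c h, 0 ≤ x k c h) ∧ (∀ k, ∑ c, ∑ h, x k c h = 1) ∧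
      ∀ k c h, (∀ y ∈ l', (VV y.1 y.2 : EE p e n) k c h = 0) → x k c h = 0}
    have hQ : Convex ℝ Q := by
      intro x hx y hy a b ha hb hab
      refine ⟨fun k c h => ?_, fun k => ?_, fun k c h hh => ?_⟩
      · have := hx.1 k c h
        have := hy.1 k c h
        simp only [Pi.add_apply, Pi.smul_apply, smul_eq_mul]
        positivity
      · simp only [Pi.add_apply, Pi.smul_apply, smul_eq_mul, Finset.sum_add_distrib,
          ← Finset.mul_sum, hx.2.1 k, hy.2.1 k, mul_one, hab]
      · simp [hx.2.2 k c h hh, hy.2.2 k c h hh]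
    have hsub : hull (l'.map fun x => (VV x.1 x.2 : EE p e n)) ⊆ Q := by
      refine hull_subset hQ fun x hx => ?_
      obtain ⟨y, hy, rfl⟩ := List.mem_map.1 hx
      refine ⟨fun k c h => ?_, fun k => ?_, fun k c h hh => hh y hy⟩
      · simp only [VV]; split_ifs <;> norm_num
      · have hle : ∑ i, y.1 ⟨k, i⟩ ≤ n k :=
          (Finset.sum_le_sum fun i _ => ((h3 y hy).1.trans hD) ⟨k, i⟩).trans (hD₀ k)
        rw [Finset.sum_eq_single (⟨n k - ∑ i, y.1 ⟨k, i⟩, by omega⟩ : Fin (n k + 1)),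
          Finset.sum_eq_single (gr y.2 k)]
        · exact if_pos ⟨by show _ - _ + _ = _; omega, rfl⟩
        · intro h _ hh
          simp [VV, hh]
        · simp
        · intro c _ hc
          refine Finset.sum_eq_zero fun h _ => ?_
          simp only [VV]
          rw [if_neg]
          rintro ⟨hc', -⟩
          exact hc (Fin.ext (by show _ = _ - _; omega))
        · simp
    refine hsub.trans fun x hx => ⟨hx.1, hx.2.1, fun k c h h' hh => ?_⟩
    by_contra hne
    have hex : ∀ h, x k c h ≠ 0 → ∃ y ∈ l', (VV y.1 y.2 : EE p e n) k c h ≠ 0 := by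
      intro h hx0
      by_contra! hcon
      exact hx0 (hx.2.2 k c h hcon)
    obtain ⟨y, hy, hyn⟩ := hex h (left_ne_zero_of_mul hne)
    obtain ⟨y', hy', hyn'⟩ := hex h' (right_ne_zero_of_mul hne)
    simp only [VV, ne_eq, ite_eq_right_iff, one_ne_zero, imp_false, not_not] at hyn hyn'
    have hcomp : ∀ y ∈ l', ∀ y' ∈ l', ∑ i, y.1 ⟨k, i⟩ = ∑ i, y'.1 ⟨k, i⟩ →
        gr y.2 k = gr y'.2 k := by
      have h5 : l'.Pairwise (fun y y' => ∑ i, y.1 ⟨k, i⟩ = ∑ i, y'.1 ⟨k, i⟩ →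
        gr y.2 k = gr y'.2 k) := h2.imp fun h => h.2 k
      intro y hy y' hy'
      by_cases hyy : y = y'
      · rw [hyy]; exact fun _ => rfl
      · have : Std.Symm (fun y y' : ((Σ k, Fin (e k)) → ℕ) × ((Σ k, Fin (e k)) → ZMod p) =>
            ∑ i, y.1 ⟨k, i⟩ = ∑ i, y'.1 ⟨k, i⟩ → gr y.2 k = gr y'.2 k) :=
          ⟨fun y y' h h' => (h h'.symm).symm⟩
        exact List.Pairwise.forall
          (R := fun y y' : ((Σ k, Fin (e k)) → ℕ) × ((Σ k, Fin (e k)) → ZMod p) =>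
            ∑ i, y.1 ⟨k, i⟩ = ∑ i, y'.1 ⟨k, i⟩ → gr y.2 k = gr y'.2 k)
          h5 hy hy' hyy
    refine hh ?_
    rw [hyn.2, hyn'.2]
    exact hcomp y hy y' hy' (by omega)
  · rintro x y z ⟨h1, h2⟩ ⟨h3, h4⟩
    refine ⟨h3.trans h1, fun k hk => ?_⟩
    have h5 : ∑ i, y.1 ⟨k, i⟩ ≤ ∑ i, x.1 ⟨k, i⟩ := Finset.sum_le_sum fun i _ => h1 _
    have h6 : ∑ i, z.1 ⟨k, i⟩ ≤ ∑ i, y.1 ⟨k, i⟩ := Finset.sum_le_sum fun i _ => h3 _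
    exact (h2 k (by omega)).trans (h4 k (by omega))
  · exact fun x => ⟨le_rfl, fun _ _ => rfl⟩
  · rintro D g ⟨k₀, i₀⟩ a hD
    refine ⟨fun k => dec_le _ _ _, fun k hk => ?_⟩
    by_cases hkk : k = k₀
    · subst hkk
      exfalso
      have : ∑ i, dec D ⟨k, i₀⟩ ⟨k, i⟩ < ∑ i, D ⟨k, i⟩ :=
        Finset.sum_lt_sum (fun i _ => dec_le _ _ _) ⟨i₀, Finset.mem_univ _, by
          rw [dec_self]; omega⟩
      simp only at hk
      omega
    · ext i
      have : (⟨k, i⟩ : Σ k, Fin (e k)) ≠ ⟨k₀, i₀⟩ := fun h => hkk (congrArg Sigma.fst h)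
      simp [gr, this]

/-- Borsuk–Ulam for products of joins of elementary abelian groups. -/
theorem borsuk_ulam_joins {J : Type*} [Fintype J] (χ : J → (Σ k, Fin (e k)) → ZMod p)
    (lead : J → Σ k, Fin (e k)) (rank : (Σ k, Fin (e k)) → ℕ) (h0 : ∀ j, χ j (lead j) ≠ 0)
    (hlead : ∀ j i, χ j i ≠ 0 → i = lead j ∨ rank i < rank (lead j))
    (hn : ∀ k, qq p * Finset.card {j | (lead j).1 = k} ≤ n k)
    (φ : J → EE p e n → ℂ) (hφc : ∀ j, ContinuousOn (φ j) (PP p e n))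
    (hφ : ∀ j, ∀ x ∈ PP p e n, ∀ g,
      φ j (actE g x) = ZMod.stdAddChar (∑ i, χ j i * g i) * φ j x)
    (hreal : p = 2 → ∀ j, ∀ x ∈ PP p e n, (φ j x).im = 0) :
    ∃ x ∈ PP p e n, ∀ j, φ j x = 0 := by
  classical
  let ord : (Σ k, Fin (e k)) → ℕ := fun i => Fintype.equivFin _ i
  have hord : Function.Injective ord :=
    fun i k h => (Fintype.equivFin _).injective (Fin.ext h)
  refine borsuk_ulam χ lead rank h0 hlead actE ?_ ?_ (PP p e n) PP.isCompact PP.act_mem PP.free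
    hord VV (fun i => qq p * ((Finset.univ.toList.map lead).count i)) (fun i => rfl)
    (fun D g h _ => actE_VV D g h) (fun m D g hD => zc_mem_PP ord _ ?_ m D hD g) φ hφc hφ hreal
  · intro g h x
    ext k c y
    simp only [actE_apply, gr_add]
    congr 1
    abel
  · intro x
    ext k c y
    rw [actE_apply]
    congr 1
    exact sub_zero y
  · intro k
    refine le_trans (le_of_eq ?_) (hn k)
    rw [← Finset.mul_sum]
    congr 1
    have h1 : ∀ i : Σ k, Fin (e k), (Finset.univ.toList.map lead).count i =
        Finset.card {j | lead j = i} := by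
      intro i
      rw [← Multiset.coe_count, ← Multiset.map_coe, Finset.coe_toList, Multiset.count_map]
      simp only [eq_comm (a := i)]
      rfl
    simp only [h1]
    rw [Finset.card_eq_sum_card_fiberwise (f := fun j => lead j)
      (t := Finset.univ.map ⟨fun i : Fin (e k) => (⟨k, i⟩ : Σ k, Fin (e k)),
        fun i i' h => by simpa using h⟩)]
    · rw [Finset.sum_map]
      refine Finset.sum_congr rfl fun i _ => ?_
      congr 1
      ext j
      simp only [Finset.mem_filter, Finset.mem_univ, true_and, Function.Embedding.coeFn_mk]
      exact ⟨fun h => ⟨by rw [h], h⟩, fun h => h.2⟩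
    · intro j hj
      simp only [Finset.coe_filter, Finset.mem_univ, true_and, Set.mem_ofPred_eq] at hj
      subst hj
      simp only [Finset.coe_map, Set.mem_image]
      exact ⟨(lead j).2, by simp, rfl⟩

end Joins

/-! ### Fourier analysis on elementary abelian groups -/

section Fourier
variable {p : ℕ} [Fact p.Prime] {s : ℕ}

lemma conj_stdAddChar (t : ZMod p) :
    (starRingEnd ℂ) (ZMod.stdAddChar t) = ZMod.stdAddChar (-t) := by
  rw [AddChar.map_neg_eq_inv]
  refine (Complex.inv_eq_conj ?_).symm
  exact AddChar.norm_apply _ _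

lemma stdAddChar_pow (t : ZMod p) : (ZMod.stdAddChar t : ℂ) ^ p = 1 := by
  rw [← AddChar.map_nsmul_eq_pow]
  simp

/-- Characters of `(ZMod p) ^ s` are orthogonal to the trivial one. -/
lemma sum_char_eq_zero (v : Fin s → ZMod p) (hv : v ≠ 0) :
    ∑ g : Fin s → ZMod p, (ZMod.stdAddChar (∑ i, v i * g i) : ℂ) = 0 := by
  obtain ⟨i, hi⟩ := Function.ne_iff.1 hv
  obtain ⟨a, ha⟩ : ∃ a : ZMod p, (ZMod.stdAddChar (v i * a) : ℂ) ≠ 1 := by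
    refine ⟨(v i)⁻¹, ?_⟩
    rw [mul_inv_cancel₀ hi]
    intro h
    have := ZMod.injective_stdAddChar (h.trans (AddChar.map_zero_eq_one _).symm)
    exact one_ne_zero this
  have key : ∑ g : Fin s → ZMod p, (ZMod.stdAddChar (∑ i, v i * g i) : ℂ) =
      ZMod.stdAddChar (v i * a) * ∑ g : Fin s → ZMod p, (ZMod.stdAddChar (∑ i, v i * g i) : ℂ) := by
    rw [Finset.mul_sum]
    refine (Fintype.sum_equiv (Equiv.addRight (Pi.single i a)) _ _ fun g => ?_).symm
    rw [← AddChar.map_add_eq_mul]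
    congr 1
    simp only [Equiv.coe_addRight, Pi.add_apply, mul_add, Finset.sum_add_distrib]
    rw [add_comm]
    congr 1
    rw [Finset.sum_eq_single i]
    · simp
    · intro j _ hj
      simp [hj]
    · simp
  by_contra hne
  exact ha (mul_right_cancel₀ hne (by rw [one_mul]; exact key.symm))

/-- A function all of whose Fourier coefficients vanish is zero. -/
lemma fourier_eq_zero (L : (Fin s → ZMod p) → ℂ)
    (hL : ∀ χ : Fin s → ZMod p, ∑ g, ZMod.stdAddChar (∑ i, χ i * g i) * L g = 0)
    (g₀ : Fin s → ZMod p) : L g₀ = 0 := by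
  have h1 : ∑ χ : Fin s → ZMod p, ZMod.stdAddChar (-∑ i, χ i * g₀ i) *
      ∑ g, ZMod.stdAddChar (∑ i, χ i * g i) * L g = 0 :=
    Finset.sum_eq_zero fun χ _ => by rw [hL χ, mul_zero]
  simp only [Finset.mul_sum] at h1
  rw [Finset.sum_comm] at h1
  have h2 : ∀ g : Fin s → ZMod p, ∑ χ : Fin s → ZMod p, ZMod.stdAddChar (-∑ i, χ i * g₀ i) *
      (ZMod.stdAddChar (∑ i, χ i * g i) * L g) =
      (∑ χ : Fin s → ZMod p, ZMod.stdAddChar (∑ i, (g - g₀) i * χ i)) * L g := by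
    intro g
    rw [Finset.sum_mul]
    refine Finset.sum_congr rfl fun χ _ => ?_
    rw [← mul_assoc, ← AddChar.map_add_eq_mul]
    congr 2
    rw [neg_add_eq_sub, ← Finset.sum_sub_distrib]
    refine Finset.sum_congr rfl fun i _ => ?_
    rw [Pi.sub_apply]; ring
  simp only [h2] at h1
  rw [Finset.sum_eq_single g₀] at h1
  · refine (mul_eq_zero.1 h1).resolve_left ?_
    simp [Fact.out (p := p.Prime) |>.ne_zero]
  · intro g _ hg
    rw [sum_char_eq_zero _ (sub_ne_zero.2 hg), zero_mul]
  · simp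

/-- A half set of the nontrivial characters: one of each pair `χ`, `-χ`. For `p = 2` all nontrivial
characters are needed, and `qq p = 1`. -/
lemma half_exists (s : ℕ) : ∃ H : Finset (Fin s → ZMod p), 0 ∉ H ∧
    (∀ χ, χ ≠ 0 → χ ∈ H ∨ -χ ∈ H) ∧ qq p * H.card ≤ p ^ s - 1 := by
  classical
  have hcard : (Finset.univ.erase (0 : Fin s → ZMod p)).card = p ^ s - 1 := by
    rw [Finset.card_erase_of_mem (Finset.mem_univ _)]
    simp
  by_cases hp : p = 2
  · refine ⟨Finset.univ.erase 0, by simp, fun χ h => by simp [h], ?_⟩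
    rw [hcard, qq, if_pos hp, one_mul]
  · let num : (Fin s → ZMod p) → ℕ := fun χ => Fintype.equivFin _ χ
    have hnum : Function.Injective num :=
      fun i k h => (Fintype.equivFin _).injective (Fin.ext h)
    -- an enumeration of the characters selects one of each pair
    refine ⟨Finset.univ.filter fun χ => num (-χ) < num χ, by simp, fun χ h => ?_, ?_⟩
    · simp only [Finset.mem_filter, Finset.mem_univ, true_and, neg_neg]
      refine (lt_or_gt_of_ne fun h' => h ?_)
      have h2 := hnum h'
      have h3 : (2 : ZMod p) ≠ 0 := by
        intro h4
        have h5 : ((2 : ℕ) : ZMod p) = 0 := by exact_mod_cast h4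
        rw [ZMod.natCast_eq_zero_iff] at h5
        exact hp ((Nat.prime_dvd_prime_iff_eq Fact.out Nat.prime_two).1 h5)
      ext i
      have h6 : - χ i = χ i := congrFun h2 i
      have h7 : 2 * χ i = 0 := by linear_combination -h6
      exact (mul_eq_zero.1 h7).resolve_left h3
    · rw [← hcard, qq, if_neg hp, two_mul]
      nth_rewrite 2 [← Finset.card_map (Equiv.neg (Fin s → ZMod p)).toEmbedding]
      rw [← Finset.card_union_of_disjoint]
      · refine Finset.card_le_card fun χ hχ => ?_
        simp only [Finset.mem_erase, Finset.mem_univ, and_true]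
        rintro rfl
        simp at hχ
      · rw [Finset.disjoint_left]
        intro χ h1 h2
        simp only [Finset.mem_filter, Finset.mem_univ, true_and, Finset.mem_map_equiv,
          Equiv.neg_symm, Equiv.neg_apply, neg_neg] at h1 h2
        omega

/-- Real weights whose Fourier coefficients vanish on a half set of nontrivial characters are
constant. -/
lemma weights_const (H : Finset (Fin s → ZMod p)) (hH : ∀ χ, χ ≠ 0 → χ ∈ H ∨ -χ ∈ H)
    (w : (Fin s → ZMod p) → ℝ) (hw : ∑ g, w g = 1)
    (hz : ∀ χ ∈ H, ∑ g, ZMod.stdAddChar (∑ i, χ i * g i) * (w g : ℂ) = 0)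
    (g₀ : Fin s → ZMod p) : w g₀ = ((p : ℝ) ^ s)⁻¹ := by
  have hz' : ∀ χ : Fin s → ZMod p, χ ≠ 0 →
      ∑ g, ZMod.stdAddChar (∑ i, χ i * g i) * (w g : ℂ) = 0 := by
    intro χ hχ
    rcases hH χ hχ with h | h
    · exact hz χ h
    · have := congrArg (starRingEnd ℂ) (hz _ h)
      rw [map_zero, map_sum] at this
      rw [← this]
      refine Finset.sum_congr rfl fun g _ => ?_
      rw [map_mul, conj_stdAddChar, Complex.conj_ofReal]
      simp [Finset.sum_neg_distrib]
  have key := fourier_eq_zero (fun g => ((w g - ((p : ℝ) ^ s)⁻¹ : ℝ) : ℂ)) ?_ g₀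
  · have : w g₀ - ((p : ℝ) ^ s)⁻¹ = 0 := by exact_mod_cast key
    linarith
  · intro χ
    have hp0 : (p : ℂ) ≠ 0 := by exact_mod_cast (Fact.out : p.Prime).ne_zero
    simp only [Complex.ofReal_sub, mul_sub, Finset.sum_sub_distrib, ← Finset.sum_mul]
    by_cases hχ : χ = 0
    · subst hχ
      have : ∑ g, (w g : ℂ) = 1 := by exact_mod_cast hw
      simp [this, hp0]
    · rw [hz' χ hχ, sum_char_eq_zero χ hχ]; simp

/-- Two nonnegative multiples of `p`-th roots of unity, `p` odd, do not cancel. -/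
lemma smul_char_cancel (hp : p ≠ 2) {a b : ℝ} (ha : 0 ≤ a) (hb : 0 ≤ b) (t t' : ZMod p)
    (h : (a : ℂ) * ZMod.stdAddChar t + (b : ℂ) * ZMod.stdAddChar t' = 0) : a = 0 ∧ b = 0 := by
  have hodd : Odd p := (Fact.out : p.Prime).odd_of_ne_two hp
  have h1 : ((a : ℂ) * ZMod.stdAddChar t) ^ p = (-((b : ℂ) * ZMod.stdAddChar t')) ^ p := by
    rw [eq_neg_of_add_eq_zero_left h]
  rw [hodd.neg_pow, mul_pow, mul_pow, stdAddChar_pow, stdAddChar_pow, mul_one, mul_one] at h1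
  have h2 : a ^ p = - b ^ p := by exact_mod_cast h1
  have h3 := pow_nonneg ha p
  have h4 := pow_nonneg hb p
  exact ⟨pow_eq_zero_iff (Fact.out : p.Prime).ne_zero |>.1 (by linarith),
    pow_eq_zero_iff (Fact.out : p.Prime).ne_zero |>.1 (by linarith)⟩

end Fourier

/-! ### Homogeneous extension and flats -/

section Geometry

/-- The homogeneous extension of degree one of a map from the simplex, in coordinates. -/
def hom {N d : ℕ} (f : EuclideanSpace ℝ (Fin (N + 1)) → EuclideanSpace ℝ (Fin d))
    (y : Fin (N + 1) → ℝ) (j : Fin d) : ℝ :=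
  (∑ c, y c) * f (WithLp.toLp 2 ((∑ c, y c)⁻¹ • y)) j

lemma normalize_mem {N : ℕ} {y : Fin (N + 1) → ℝ} (hy : ∀ c, 0 ≤ y c) (h0 : ∑ c, y c ≠ 0) :
    WithLp.toLp 2 ((∑ c, y c)⁻¹ • y) ∈ stdSimp N := by
  refine ⟨fun i => ?_, ?_⟩
  · have := Finset.sum_nonneg fun c (_ : c ∈ Finset.univ) => hy c
    have := hy i
    simp only [Pi.smul_apply, smul_eq_mul]
    positivity
  · simp only [Pi.smul_apply, smul_eq_mul, ← Finset.mul_sum]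
    exact inv_mul_cancel₀ h0

lemma stdSimp_isCompact (N : ℕ) : IsCompact (stdSimp N) := by
  refine Metric.isCompact_of_isClosed_isBounded ?_ ?_
  · simp only [stdSimp, Set.ofPred_and, Set.ofPred_forall]
    refine IsClosed.inter ?_ ?_
    · exact isClosed_iInter fun k => isClosed_le (by fun_prop) (by fun_prop)
    · exact isClosed_eq (by fun_prop) (by fun_prop)
  · refine (Metric.isBounded_closedBall (x := (0 : EuclideanSpace ℝ (Fin (N + 1)))) (r := N + 1)).subset
      fun x hx => ?_
    rw [mem_closedBall_zero_iff, EuclideanSpace.norm_eq]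
    refine Real.sqrt_le_iff.2 ⟨by positivity, ?_⟩
    have h1 : ∀ i, x i ≤ 1 := fun i => by
      rw [← hx.2]
      exact Finset.single_le_sum (f := fun i => x i) (fun i _ => hx.1 i) (Finset.mem_univ i)
    have h2 : ∑ i, ‖x i‖ ^ 2 ≤ ∑ i : Fin (N + 1), (1 : ℝ) := by
      refine Finset.sum_le_sum fun i _ => ?_
      rw [Real.norm_eq_abs, sq_abs]
      have := hx.1 i
      have := h1 i
      nlinarith
    refine h2.trans ?_
    simp only [Finset.sum_const, Finset.card_univ, Fintype.card_fin, nsmul_eq_mul, mul_one]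
    push_cast
    nlinarith [Nat.cast_nonneg (α := ℝ) N]

lemma hom_continuousOn {N d : ℕ} {f : EuclideanSpace ℝ (Fin (N + 1)) → EuclideanSpace ℝ (Fin d)}
    (hf : ContinuousOn f (stdSimp N)) (j : Fin d) :
    ContinuousOn (fun y => hom f y j) {y | ∀ c, 0 ≤ y c} := by
  have hfj : ContinuousOn (fun x => f x j) (stdSimp N) := by
    have : Continuous fun z : EuclideanSpace ℝ (Fin d) => z j := by fun_prop
    exact this.comp_continuousOn hf
  obtain ⟨M, hM⟩ := (stdSimp_isCompact N).exists_bound_of_continuousOn hfj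
  intro y hy
  by_cases h0 : ∑ c, y c = 0
  · have hs : Continuous fun y : Fin (N + 1) → ℝ => ∑ c, y c := by fun_prop
    have hlim : Filter.Tendsto (fun y : Fin (N + 1) → ℝ => M * ∑ c, y c)
        (nhdsWithin y {y | ∀ c, 0 ≤ y c}) (nhds 0) := by
      have : Continuous fun y : Fin (N + 1) → ℝ => M * ∑ c, y c := by fun_prop
      have h := this.tendsto y
      rw [h0, mul_zero] at h
      exact h.mono_left nhdsWithin_le_nhds
    have hz : hom f y j = 0 := by simp [hom, h0]
    show Filter.Tendsto _ _ (nhds (hom f y j))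
    rw [hz]
    refine squeeze_zero_norm' ?_ hlim
    filter_upwards [self_mem_nhdsWithin] with z hz
    by_cases hz0 : ∑ c, z c = 0
    · simp [hom, hz0]
    · have hpos := Finset.sum_nonneg fun c (_ : c ∈ Finset.univ) => hz c
      rw [hom, norm_mul, Real.norm_eq_abs, abs_of_nonneg hpos, mul_comm]
      exact mul_le_mul_of_nonneg_right (hM _ (normalize_mem hz hz0)) hpos
  · have hs : ContinuousAt (fun y : Fin (N + 1) → ℝ => ∑ c, y c) y := by fun_prop
    have hev : ∀ᶠ z in nhdsWithin y {y | ∀ c, 0 ≤ y c}, ∑ c, z c ≠ 0 :=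
      (hs.eventually_ne h0).filter_mono nhdsWithin_le_nhds
    refine hs.continuousWithinAt.mul ?_
    have h1 : ContinuousAt (fun y : Fin (N + 1) → ℝ =>
        WithLp.toLp 2 ((∑ c, y c)⁻¹ • y)) y := by
      have h2 : ContinuousAt (fun y : Fin (N + 1) → ℝ => (∑ c, y c)⁻¹ • y) y :=
        (hs.inv₀ h0).smul continuousAt_id
      exact (PiLp.continuous_toLp 2 _).continuousAt.comp h2
    refine Filter.Tendsto.comp (hfj _ (normalize_mem hy h0)) ?_
    refine tendsto_nhdsWithin_iff.2 ⟨h1.continuousWithinAt, ?_⟩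
    filter_upwards [self_mem_nhdsWithin, hev] with z hz hz0
    exact normalize_mem hz hz0

/-- A solvable system of affine equations `∑ j, v j • U a j + U₀ a = 0` in a vector space `W`
defines an affine subspace of the expected dimension if the homogenized system has full rank.
Solvability and full rank of the homogenized system imply that the linear part has full rank. -/
lemma exists_flat {d h : ℕ} {W : Type*} [AddCommGroup W] [Module ℝ W] [FiniteDimensional ℝ W]
    (U : Fin h → Fin d → W) (U₀ : Fin h → W)
    (hsurj : ∀ b (w : W), ∃ (y : Fin d → ℝ) (y₀ : ℝ),
      ∀ a, ∑ j, y j • U a j + y₀ • U₀ a = if a = b then w else 0)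
    (v : EuclideanSpace ℝ (Fin d)) (hv : ∀ a, ∑ j, v j • U a j + U₀ a = 0) :
    ∃ L : AffineSubspace ℝ (EuclideanSpace ℝ (Fin d)),
      (L : Set (EuclideanSpace ℝ (Fin d))).Nonempty ∧
      Module.finrank ℝ L.direction = d - h * Module.finrank ℝ W ∧
      ∀ v' : EuclideanSpace ℝ (Fin d), (∀ a, ∑ j, v' j • U a j + U₀ a = 0) → v' ∈ L := by
  classical
  let A : EuclideanSpace ℝ (Fin d) →ₗ[ℝ] (Fin h → W) :=
    { toFun := fun y a => ∑ j, y j • U a j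
      map_add' := fun y z => by
        ext a; simp [add_smul, Finset.sum_add_distrib]
      map_smul' := fun c y => by
        ext a; simp [mul_smul, Finset.smul_sum] }
  have hA : ∀ y a, A y a = ∑ j, y j • U a j := fun _ _ => rfl
  have hr : LinearMap.range A = ⊤ := by
    rw [eq_top_iff]
    intro z _
    rw [← Finset.univ_sum_single z]
    refine Submodule.sum_mem _ fun b _ => ?_
    obtain ⟨y, y₀, hy⟩ := hsurj b (z b)
    -- a solution `v` removes the homogenizing coordinate
    refine ⟨WithLp.toLp 2 y - y₀ • v, ?_⟩
    ext a
    have h1 := hy a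
    have h2 := hv a
    rw [map_sub, map_smul, Pi.sub_apply, Pi.smul_apply, hA, hA, eq_neg_of_add_eq_zero_left h2,
      smul_neg, sub_neg_eq_add, h1, Pi.single_apply]
  refine ⟨AffineSubspace.mk' v (LinearMap.ker A), ⟨v, AffineSubspace.self_mem_mk' _ _⟩, ?_, ?_⟩
  · rw [AffineSubspace.direction_mk']
    have := A.finrank_range_add_finrank_ker
    rw [hr, finrank_top, Module.finrank_pi_fintype, finrank_euclideanSpace_fin] at this
    simp at this
    omega
  · intro v' hv'
    rw [AffineSubspace.mem_mk', LinearMap.mem_ker, vsub_eq_sub, map_sub]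
    ext a
    rw [Pi.sub_apply, hA, hA, eq_neg_of_add_eq_zero_left (hv a),
      eq_neg_of_add_eq_zero_left (hv' a), sub_self]
    rfl

end Geometry

/-! ### The building blocks of the test maps -/

section TestMaps
variable {p : ℕ} [Fact p.Prime] {s : ℕ}

/-- The character of `(ZMod p) ^ s` with exponent vector `t`. -/
def cg (t g : Fin s → ZMod p) : ℂ := ZMod.stdAddChar (∑ i, t i * g i)

lemma cg_sum_shift (t γ : Fin s → ZMod p) (A : (Fin s → ZMod p) → ℂ) :
    ∑ g, cg t g * A (g - γ) = cg t γ * ∑ g, cg t g * A g := by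
  rw [Finset.mul_sum]
  refine Fintype.sum_equiv (Equiv.subRight γ) _ _ fun g => ?_
  rw [← mul_assoc, cg, cg, cg, ← AddChar.map_add_eq_mul]
  congr 2
  rw [← Finset.sum_add_distrib]
  refine Finset.sum_congr rfl fun i _ => ?_
  simp only [Equiv.subRight_apply, Pi.sub_apply]
  ring

variable {K : Type*} [Fintype K] [DecidableEq K] {e n : K → ℕ}

/-- The character of the whole group induced by one of its component groups. -/
def sc (k : K) (t : Fin (e k) → ZMod p) : (Σ k, Fin (e k)) → ZMod p :=
  fun i => (Pi.single k t : ∀ k, Fin (e k) → ZMod p) i.1 i.2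

lemma sc_self (k : K) (t : Fin (e k) → ZMod p) (i : Fin (e k)) : sc k t ⟨k, i⟩ = t i := by
  simp [sc]

lemma sc_ne (k k' : K) (t : Fin (e k) → ZMod p) (i : Fin (e k')) (hk : k' ≠ k) :
    sc k t ⟨k', i⟩ = 0 := by
  simp [sc, hk]

lemma sc_pair (k : K) (t : Fin (e k) → ZMod p) (γ : (Σ k, Fin (e k)) → ZMod p) :
    ∑ i, sc k t i * γ i = ∑ i, t i * gr γ k i := by
  rw [Fintype.sum_sigma, Finset.sum_eq_single k]
  · exact Finset.sum_congr rfl fun i _ => by rw [sc_self]; rfl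
  · intro k' _ hk
    exact Finset.sum_eq_zero fun i _ => by rw [sc_ne k k' t i hk, zero_mul]
  · simp

lemma stdAddChar_sc (k : K) (t : Fin (e k) → ZMod p) (γ : (Σ k, Fin (e k)) → ZMod p) :
    ZMod.stdAddChar (∑ i, sc k t i * γ i) = cg t (gr γ k) := by
  rw [sc_pair, cg]

/-- The Fourier coefficient at the character `t` of the join coordinate number `i` of the
component `k`; it is `0` if there is no such join coordinate. -/
def ZZ (x : EE p e n) (k : K) (t : Fin (e k) → ZMod p) (i : ℕ) : ℂ :=
  if hi : i < n k + 1 then ∑ g, cg t g * (x k ⟨i, hi⟩ g : ℂ) else 0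

lemma ZZ_act (γ : (Σ k, Fin (e k)) → ZMod p) (x : EE p e n) (k : K) (t : Fin (e k) → ZMod p)
    (i : ℕ) : ZZ (actE γ x) k t i = cg t (gr γ k) * ZZ x k t i := by
  unfold ZZ
  split_ifs with hi
  · exact cg_sum_shift t (gr γ k) fun g => (x k ⟨i, hi⟩ g : ℂ)
  · rw [mul_zero]

lemma ZZ_continuous (k : K) (t : Fin (e k) → ZMod p) (i : ℕ) :
    Continuous fun x : EE p e n => ZZ x k t i := by
  unfold ZZ
  split_ifs with hi
  · fun_prop
  · fun_prop

/-- On the product of joins, each join coordinate is concentrated in at most one group element, so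
its Fourier coefficients are nonnegative multiples of roots of unity. -/
lemma ZZ_eq (x : EE p e n) (hx : x ∈ PP p e n) (k : K) (t : Fin (e k) → ZMod p) (i : ℕ) :
    ∃ (a : ℝ) (b : ZMod p), 0 ≤ a ∧ ZZ x k t i = a * ZMod.stdAddChar b ∧
      (a = 0 → ∀ hi : i < n k + 1, ∀ g, x k ⟨i, hi⟩ g = 0) := by
  by_cases hi : i < n k + 1
  · by_cases h0 : ∀ g, x k ⟨i, hi⟩ g = 0
    · exact ⟨0, 0, le_rfl, by simp [ZZ, hi, h0], fun _ _ => h0⟩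
    · push Not at h0
      obtain ⟨g, hg⟩ := h0
      refine ⟨x k ⟨i, hi⟩ g, ∑ i, t i * g i, hx.1 _ _ _, ?_, fun h => absurd h hg⟩
      rw [ZZ, dif_pos hi, Finset.sum_eq_single g]
      · rw [cg, mul_comm]
      · intro g' _ hg'
        have := (mul_eq_zero.1 (hx.2.2 k ⟨i, hi⟩ g' g hg')).resolve_right hg
        rw [this]; simp
      · simp
  · exact ⟨0, 0, le_rfl, by simp [ZZ, hi], fun _ h => absurd h hi⟩

/-- Blocks of `qq p` consecutive join coordinates give a complex vector, which vanishes on the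
product of joins only if the weights of the block do. -/
def uu (x : EE p e n) (k : K) (j : ℕ) : ℂ :=
  ∑ r ∈ Finset.range (qq p), ZZ x k (fun _ => 1) (qq p * j + r)

lemma uu_act (γ : (Σ k, Fin (e k)) → ZMod p) (x : EE p e n) (k : K) (j : ℕ) :
    uu (actE γ x) k j = cg (fun _ => 1) (gr γ k) * uu x k j := by
  simp only [uu, ZZ_act, Finset.mul_sum]

lemma uu_continuous (k : K) (j : ℕ) : Continuous fun x : EE p e n => uu x k j :=
  continuous_finsetSum _ fun r _ => ZZ_continuous _ _ _

lemma qq_pos (p : ℕ) : 0 < qq p := by unfold qq; split_ifs <;> omega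

/-- The frame vectors do not vanish. For `p` odd a block has two join coordinates, which do not
cancel by `smul_char_cancel`. -/
lemma uu_ne_zero (x : EE p e n) (hx : x ∈ PP p e n) (k : K) :
    ∃ j, j ≤ n k / qq p ∧ uu x k j ≠ 0 := by
  obtain ⟨c, -, hc⟩ := Finset.exists_ne_zero_of_sum_ne_zero
    (show ∑ c, ∑ h, x k c h ≠ 0 by rw [hx.2.1 k]; exact one_ne_zero)
  obtain ⟨y, -, hy⟩ := Finset.exists_ne_zero_of_sum_ne_zero hc
  refine ⟨(c : ℕ) / qq p, Nat.div_le_div_right (by omega), fun h0 => ?_⟩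
  have hcdm := Nat.div_add_mod (c : ℕ) (qq p)
  have hlt := Nat.mod_lt (c : ℕ) (qq_pos p)
  have key : ∀ i, i = (c : ℕ) → ∀ a : ℝ, a = 0 →
      (a = 0 → ∀ hi : i < n k + 1, ∀ g, x k ⟨i, hi⟩ g = 0) → False := by
    rintro i rfl a ha h
    exact hy (h ha c.2 y)
  by_cases hp : p = 2
  · have hq : qq p = 1 := by simp [qq, hp]
    rw [uu, hq] at h0
    simp only [Finset.range_one, Finset.sum_singleton, one_mul, add_zero, Nat.div_one] at h0
    obtain ⟨a, b, ha, h1, h2⟩ := ZZ_eq x hx k (fun _ => 1) c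
    rw [h1] at h0
    refine key c rfl a ?_ h2
    exact_mod_cast (mul_eq_zero.1 h0).resolve_right (stdAddChar_ne_zero b)
  · have hq : qq p = 2 := by simp [qq, hp]
    rw [hq] at hcdm hlt
    rw [uu, hq] at h0
    simp only [Finset.sum_range_succ, Finset.range_zero, Finset.sum_empty, zero_add] at h0
    obtain ⟨a, b, ha, h1, h2⟩ := ZZ_eq x hx k (fun _ => 1) (2 * ((c : ℕ) / 2) + 0)
    obtain ⟨a', b', ha', h1', h5⟩ := ZZ_eq x hx k (fun _ => 1) (2 * ((c : ℕ) / 2) + 1)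
    rw [h1, h1'] at h0
    obtain ⟨h3, h4⟩ := smul_char_cancel hp ha ha' b b' h0
    rcases (show (c : ℕ) % 2 = 0 ∨ (c : ℕ) % 2 = 1 by omega) with h | h
    · exact key _ (by omega) a h3 h2
    · exact key _ (by omega) _ h4 h5

/-- The total weight of the group element `g` in the component `k`. -/
def lam (x : EE p e n) (k : K) (g : Fin (e k) → ZMod p) : ℝ := ∑ c, x k c g

/-- The pairing of the complex vector `uu x k'` with the vector `(F y, ∑ y)`, where `y` are the
weights of the group element `g` in the component `k`. -/
def TT {d : ℕ} (k k' : K) (F : (Fin (n k + 1) → ℝ) → Fin d → ℝ) (x : EE p e n)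
    (g : Fin (e k) → ZMod p) : ℂ :=
  ∑ j : Fin d, uu x k' j * (F (fun c => x k c g) j : ℂ) + uu x k' d * (lam x k g : ℂ)

lemma TT_act {d : ℕ} (k k' : K) (F : (Fin (n k + 1) → ℝ) → Fin d → ℝ)
    (γ : (Σ k, Fin (e k)) → ZMod p) (x : EE p e n) (g : Fin (e k) → ZMod p) :
    TT k k' F (actE γ x) g = cg (fun _ => 1) (gr γ k') * TT k k' F x (g - gr γ k) := by
  simp only [TT, uu_act, mul_add, Finset.mul_sum, mul_assoc]
  rfl

lemma TT_continuousOn {d : ℕ} (k k' : K) (F : (Fin (n k + 1) → ℝ) → Fin d → ℝ)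
    (hF : ∀ j, ContinuousOn (fun y => F y j) {y | ∀ c, 0 ≤ y c}) (g : Fin (e k) → ZMod p) :
    ContinuousOn (fun x => TT k k' F x g) (PP p e n) := by
  unfold TT lam
  refine ContinuousOn.add (continuousOn_finsetSum _ fun j _ => ?_) ?_
  · refine (uu_continuous k' j).continuousOn.mul ?_
    refine Complex.continuous_ofReal.comp_continuousOn ?_
    have hc : ContinuousOn (fun x : EE p e n => fun c => x k c g) (PP p e n) :=
      Continuous.continuousOn (by fun_prop)
    exact (hF j).comp hc fun x hx c => hx.1 k c g
  · exact ((uu_continuous k' d).mul (by fun_prop)).continuousOn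

/-! ### Reality for p = 2 -/

lemma cg_real (hp : p = 2) (t g : Fin s → ZMod p) : cg t g ∈ Complex.ofRealHom.range := by
  subst hp
  have h : cg t g * cg t g = 1 := by
    rw [cg, ← AddChar.map_add_eq_mul, ← two_mul, show (2 : ZMod 2) = 0 from rfl, zero_mul,
      AddChar.map_zero_eq_one]
  rcases mul_self_eq_one_iff.1 h with h | h
  · rw [h]; exact one_mem _
  · rw [h]; exact neg_mem (one_mem _)

lemma ofReal_mem (a : ℝ) : (a : ℂ) ∈ Complex.ofRealHom.range := ⟨a, rfl⟩

lemma uu_real (hp : p = 2) (x : EE p e n) (k : K) (j : ℕ) :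
    uu x k j ∈ Complex.ofRealHom.range := by
  refine sum_mem fun r _ => ?_
  unfold ZZ
  split_ifs
  · exact sum_mem fun g _ => mul_mem (cg_real hp _ _) (ofReal_mem _)
  · exact zero_mem _

lemma TT_real (hp : p = 2) {d : ℕ} (k k' : K) (F : (Fin (n k + 1) → ℝ) → Fin d → ℝ)
    (x : EE p e n) (g : Fin (e k) → ZMod p) : TT k k' F x g ∈ Complex.ofRealHom.range :=
  add_mem (sum_mem fun j _ => mul_mem (uu_real hp _ _ _) (ofReal_mem _))
    (mul_mem (uu_real hp _ _ _) (ofReal_mem _))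

lemma im_of_mem {z : ℂ} (hz : z ∈ Complex.ofRealHom.range) : z.im = 0 := by
  obtain ⟨a, rfl⟩ := hz
  exact Complex.ofReal_im a

lemma conj_of_mem {z : ℂ} (hz : z ∈ Complex.ofRealHom.range) : (starRingEnd ℂ) z = z :=
  Complex.conj_eq_iff_im.2 (im_of_mem hz)

lemma exists_top (t : Fin s → ZMod p) (ht : t ≠ 0) : ∃ i, t i ≠ 0 ∧ ∀ i', t i' ≠ 0 → i' ≤ i := by
  classical
  obtain ⟨i₀, h₀⟩ := Function.ne_iff.1 ht
  obtain ⟨i, hi, hmax⟩ := (Finset.univ.filter fun i => t i ≠ 0).exists_max_image id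
    ⟨i₀, by simpa using h₀⟩
  exact ⟨i, by simpa using hi, fun i' h => hmax i' (by simpa using h)⟩

end TestMaps

/-! ### Test characters, leading terms and counting -/

section Zero
variable {p : ℕ} [Fact p.Prime] {m h d : ℕ} {e n : Fin (m + 1) ⊕ Fin h → ℕ}

/-- The index set of the test maps: hermitian products of distinct frame vectors, bilinear products
of frame vectors (for `p` odd), Fourier coefficients of the total weights on half sets of
characters, and all Fourier coefficients of the pairings of frame vectors with image points. -/
abbrev JJ (p h : ℕ) (e : Fin (m + 1) ⊕ Fin h → ℕ)
    (H : ∀ ℓ, Finset (Fin (e (Sum.inl ℓ)) → ZMod p)) : Type :=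
  ((Σ b : Fin h, Fin b) ⊕ (Σ b : Fin h, Fin ((qq p - 1) * (b + 1)))) ⊕
    ((Σ ℓ, H ℓ) ⊕ (Σ ℓ : Fin (m + 1), Fin h × (Fin (e (Sum.inl ℓ)) → ZMod p)))

lemma qq_le (p : ℕ) : qq p ≤ 2 := by unfold qq; split_ifs <;> omega

/-- The second index of a hermitian pair. -/
def low (b : Fin h) (a : Fin b) : Fin h := ⟨a, by omega⟩

/-- The second index of a bilinear pair. -/
def low' (p : ℕ) (b : Fin h) (a : Fin ((qq p - 1) * (b + 1))) : Fin h := ⟨a, by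
  have h1 := a.2
  have h2 : (qq p - 1) * ((b : ℕ) + 1) ≤ 1 * (b + 1) :=
    Nat.mul_le_mul_right _ (by have := qq_le p; omega)
  omega⟩

lemma low'_le (b : Fin h) (a : Fin ((qq p - 1) * (b + 1))) : low' p b a ≤ b := by
  have h1 := a.2
  have h2 : (qq p - 1) * ((b : ℕ) + 1) ≤ 1 * (b + 1) :=
    Nat.mul_le_mul_right _ (by have := qq_le p; omega)
  show (a : ℕ) ≤ b
  omega

/-- The characters of the test maps. -/
def chi (H : ∀ ℓ, Finset (Fin (e (Sum.inl ℓ)) → ZMod p)) :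
    JJ p h e H → (Σ k, Fin (e k)) → ZMod p
  | Sum.inl (Sum.inl ⟨b, a⟩) => sc (Sum.inr b) (fun _ => 1) - sc (Sum.inr (low b a)) (fun _ => 1)
  | Sum.inl (Sum.inr ⟨b, a⟩) =>
      sc (Sum.inr b) (fun _ => 1) + sc (Sum.inr (low' p b a)) (fun _ => 1)
  | Sum.inr (Sum.inl ⟨ℓ, χ⟩) => sc (Sum.inl ℓ) χ.1
  | Sum.inr (Sum.inr ⟨ℓ, a, χ⟩) => sc (Sum.inr a) (fun _ => 1) + sc (Sum.inl ℓ) χ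

/-- The component group containing the leading index of a test character. -/
def ldk (H : ∀ ℓ, Finset (Fin (e (Sum.inl ℓ)) → ZMod p)) : JJ p h e H → Fin (m + 1) ⊕ Fin h
  | Sum.inl (Sum.inl ⟨b, _⟩) => Sum.inr b
  | Sum.inl (Sum.inr ⟨b, _⟩) => Sum.inr b
  | Sum.inr (Sum.inl ⟨ℓ, _⟩) => Sum.inl ℓ
  | Sum.inr (Sum.inr ⟨ℓ, a, χ⟩) => open Classical in if χ = 0 then Sum.inr a else Sum.inl ℓ

/-- Frame groups come first; inside the groups of the simplices the order is that of `Fin`. -/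
def rk (h : ℕ) (e : Fin (m + 1) ⊕ Fin h → ℕ) : (Σ k, Fin (e k)) → ℕ
  | ⟨Sum.inr a, _⟩ => a
  | ⟨Sum.inl _, i⟩ => h + i

/-- Every test character is nontrivial and has a leading index, that is, a unique index of highest
rank in its support; it lies in the component `ldk`. -/
lemma lead_exists (he1 : ∀ a, e (Sum.inr a) = 1) (H : ∀ ℓ, Finset (Fin (e (Sum.inl ℓ)) → ZMod p))
    (hH0 : ∀ ℓ, 0 ∉ H ℓ) (j : JJ p h e H) :
    ∃ i : Fin (e (ldk H j)), chi H j ⟨ldk H j, i⟩ ≠ 0 ∧ ∀ i', chi H j i' ≠ 0 →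
      i' = ⟨ldk H j, i⟩ ∨ rk h e i' < rk h e ⟨ldk H j, i⟩ := by
  classical
  have hu : ∀ a (i i' : Fin (e (Sum.inr a))), i = i' := fun a i i' => by
    have := he1 a
    ext; omega
  rcases j with (⟨b, a⟩ | ⟨b, a⟩) | (⟨ℓ, χ⟩ | ⟨ℓ, a, χ⟩)
  · refine ⟨⟨0, by have := he1 b; simp only [ldk]; omega⟩, ?_, ?_⟩
    · have hne : low b a ≠ b := fun h => by have := congrArg Fin.val h; simp [low] at this; omega
      simp only [chi, ldk, Pi.sub_apply]
      rw [sc_self, sc_ne _ _ _ _ (by simpa using hne.symm)]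
      simp
    · rintro ⟨ℓ' | c, i'⟩ hi'
      · exfalso
        simp only [chi, Pi.sub_apply] at hi'
        rw [sc_ne _ _ _ _ (by simp), sc_ne _ _ _ _ (by simp)] at hi'
        simp at hi'
      · by_cases hcb : c = b
        · subst hcb
          exact Or.inl (by simp only [ldk]; congr 1; exact hu _ _ _)
        · by_cases hca : c = low b a
          · right
            subst hca
            exact a.2
          · exfalso
            simp only [chi, Pi.sub_apply] at hi'
            rw [sc_ne _ _ _ _ (by simpa using hcb), sc_ne _ _ _ _ (by simpa using hca)] at hi'
            simp at hi'
  · refine ⟨⟨0, by have := he1 b; simp only [ldk]; omega⟩, ?_, ?_⟩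
    · have hp2 : p ≠ 2 := by
        rintro rfl
        have := a.2
        simp [qq] at this
      have h3 : (2 : ZMod p) ≠ 0 := by
        intro h4
        have h5 : ((2 : ℕ) : ZMod p) = 0 := by exact_mod_cast h4
        rw [ZMod.natCast_eq_zero_iff] at h5
        exact hp2 ((Nat.prime_dvd_prime_iff_eq Fact.out Nat.prime_two).1 h5)
      simp only [chi, ldk, Pi.add_apply]
      by_cases hne : low' p b a = b
      · rw [hne, sc_self, one_add_one_eq_two]; exact h3
      · rw [sc_self, sc_ne _ _ _ _ (by simpa using (Ne.symm hne))]
        simp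
    · rintro ⟨ℓ' | c, i'⟩ hi'
      · exfalso
        simp only [chi, Pi.add_apply] at hi'
        rw [sc_ne _ _ _ _ (by simp), sc_ne _ _ _ _ (by simp)] at hi'
        simp at hi'
      · by_cases hcb : c = b
        · subst hcb
          exact Or.inl (by simp only [ldk]; congr 1; exact hu _ _ _)
        · by_cases hca : c = low' p b a
          · right
            subst hca
            exact lt_of_le_of_ne (low'_le b a) fun h => hcb (Fin.ext h)
          · exfalso
            simp only [chi, Pi.add_apply] at hi'
            rw [sc_ne _ _ _ _ (by simpa using hcb), sc_ne _ _ _ _ (by simpa using hca)] at hi'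
            simp at hi'
  · have hχ : χ.1 ≠ 0 := fun h => hH0 ℓ (h ▸ χ.2)
    obtain ⟨i, hi, hmax⟩ := exists_top χ.1 hχ
    refine ⟨i, ?_, ?_⟩
    · simp only [chi, ldk]
      rw [sc_self]; exact hi
    · rintro ⟨k', i'⟩ hi'
      simp only [chi] at hi'
      by_cases hk : k' = Sum.inl ℓ
      · subst hk
        rw [sc_self] at hi'
        rcases (hmax i' hi').eq_or_lt with h | h
        · left; rw [h]; rfl
        · right
          simp only [rk, ldk]
          have : (i' : ℕ) < i := h
          omega
      · rw [sc_ne _ _ _ _ hk] at hi'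
        exact absurd rfl hi'
  · by_cases hχ : χ = 0
    · have hk : ldk H (Sum.inr (Sum.inr ⟨ℓ, a, χ⟩)) = Sum.inr a := by simp [ldk, hχ]
      rw [hk]
      refine ⟨⟨0, by have := he1 a; omega⟩, ?_, ?_⟩
      · simp only [chi, Pi.add_apply]
        rw [sc_self, sc_ne _ _ _ _ (by simp)]
        simp
      · rintro ⟨k', i'⟩ hi'
        by_cases hk' : k' = Sum.inr a
        · subst hk'
          exact Or.inl (by congr 1; exact hu _ _ _)
        · exfalso
          simp only [chi, Pi.add_apply] at hi'
          rw [sc_ne _ _ _ _ hk', zero_add] at hi'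
          by_cases hk2 : k' = Sum.inl ℓ
          · subst hk2
            rw [sc_self, hχ] at hi'
            exact hi' rfl
          · rw [sc_ne _ _ _ _ hk2] at hi'
            exact hi' rfl
    · have hk : ldk H (Sum.inr (Sum.inr ⟨ℓ, a, χ⟩)) = Sum.inl ℓ := by simp [ldk, hχ]
      rw [hk]
      obtain ⟨i, hi, hmax⟩ := exists_top χ hχ
      refine ⟨i, ?_, ?_⟩
      · simp only [chi, Pi.add_apply]
        rw [sc_self, sc_ne _ _ _ _ (by simp), zero_add]
        exact hi
      · rintro ⟨ℓ' | c, i'⟩ hi'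
        · simp only [chi, Pi.add_apply] at hi'
          rw [sc_ne (Sum.inr a) _ _ _ (by simp), zero_add] at hi'
          by_cases hl : ℓ' = ℓ
          · subst hl
            rw [sc_self] at hi'
            rcases (hmax i' hi').eq_or_lt with h | h
            · left; rw [h]
            · right
              simp only [rk]
              have : (i' : ℕ) < i := h
              omega
          · rw [sc_ne _ _ _ _ (by simpa using hl)] at hi'
            exact absurd rfl hi'
        · right
          simp only [rk]
          omega

/-- The dimension count: every component has enough join coordinates for the test maps whose leading
index lies in it. -/
lemma count_le (H : ∀ ℓ, Finset (Fin (e (Sum.inl ℓ)) → ZMod p))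
    (hH : ∀ ℓ, qq p * (H ℓ).card ≤ p ^ e (Sum.inl ℓ) - 1)
    (hn1 : ∀ ℓ, (p ^ e (Sum.inl ℓ) - 1) * (1 + qq p * h) ≤ n (Sum.inl ℓ))
    (hn2 : ∀ a : Fin h, n (Sum.inr a) = qq p * (m + qq p * (a + 1)))
    (k : Fin (m + 1) ⊕ Fin h) :
    qq p * Finset.card {j : JJ p h e H | ldk H j = k} ≤ n k := by
  classical
  rw [Finset.card_filter, Fintype.sum_sum_type, Fintype.sum_sum_type, Fintype.sum_sum_type,
    Fintype.sum_sigma, Fintype.sum_sigma, Fintype.sum_sigma, Fintype.sum_sigma]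
  simp only [Fintype.sum_prod_type, ldk]
  rcases k with ℓ | b
  · have h1 : ∀ (ℓ' : Fin (m + 1)) (a : Fin h) (χ : Fin (e (Sum.inl ℓ')) → ZMod p),
        (if (if χ = 0 then Sum.inr a else Sum.inl ℓ' : Fin (m + 1) ⊕ Fin h) = Sum.inl ℓ then 1 else 0)
          = (if χ = 0 then 0 else 1) * (if ℓ' = ℓ then 1 else 0) := by
      intro ℓ' a χ
      by_cases hχ : χ = 0 <;> simp [hχ]
    simp only [h1, ← Finset.sum_mul]
    simp only [reduceCtorEq, if_false, Finset.sum_const_zero, zero_add, Sum.inl.injEq,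
      Finset.sum_const, smul_eq_mul, mul_ite, mul_one, mul_zero, Finset.sum_ite_eq',
      Finset.mem_univ, if_true, Finset.card_univ, Fintype.card_fin, Fintype.card_coe]
    have h2 : ∑ χ : Fin (e (Sum.inl ℓ)) → ZMod p, (if χ = 0 then 0 else 1) =
        p ^ e (Sum.inl ℓ) - 1 := by
      have h3 : ∀ χ : Fin (e (Sum.inl ℓ)) → ZMod p, (if χ = 0 then 0 else 1) =
        if χ ≠ 0 then 1 else 0 := fun χ => by by_cases h : χ = 0 <;> simp [h]
      simp only [h3]
      rw [← Finset.card_filter, Finset.filter_ne', Finset.card_erase_of_mem (Finset.mem_univ _)]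
      simp
    rw [h2]
    refine le_trans ?_ (hn1 ℓ)
    have := hH ℓ
    nlinarith
  · have h1 : ∀ (ℓ' : Fin (m + 1)) (a : Fin h) (χ : Fin (e (Sum.inl ℓ')) → ZMod p),
        (if (if χ = 0 then Sum.inr a else Sum.inl ℓ' : Fin (m + 1) ⊕ Fin h) = Sum.inr b then 1 else 0)
          = (if χ = 0 then 1 else 0) * (if a = b then 1 else 0) := by
      intro ℓ' a χ
      by_cases hχ : χ = 0 <;> simp [hχ]
    simp only [h1, ← Finset.sum_mul]
    simp only [reduceCtorEq, if_false, Finset.sum_const_zero, zero_add, Sum.inr.injEq,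
      Finset.sum_const, smul_eq_mul, mul_ite, mul_one, mul_zero, Finset.sum_ite_eq',
      Finset.mem_univ, if_true, Finset.card_univ, Fintype.card_fin]
    rw [hn2 b]
    refine Nat.mul_le_mul_left _ (le_of_eq ?_)
    obtain ⟨q, hq⟩ : ∃ q, qq p = q + 1 := ⟨qq p - 1, by have := qq_pos p; omega⟩
    rw [hq]
    simp
    ring

end Zero

/-! ### The common zero and the case of codimension divisible by `qq p` -/

section Zero
variable {p : ℕ} [Fact p.Prime] {m h d : ℕ} {e n : Fin (m + 1) ⊕ Fin h → ℕ}

/-- The test maps, in the order of `JJ`. -/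
def phi (H : ∀ ℓ, Finset (Fin (e (Sum.inl ℓ)) → ZMod p))
    (F : ∀ ℓ : Fin (m + 1), (Fin (n (Sum.inl ℓ) + 1) → ℝ) → Fin d → ℝ) :
    JJ p h e H → EE p e n → ℂ
  | Sum.inl (Sum.inl ⟨b, a⟩), x =>
      ∑ j ∈ Finset.range (d + 1), uu x (Sum.inr b) j * (starRingEnd ℂ) (uu x (Sum.inr (low b a)) j)
  | Sum.inl (Sum.inr ⟨b, a⟩), x =>
      ∑ j ∈ Finset.range (d + 1), uu x (Sum.inr b) j * uu x (Sum.inr (low' p b a)) j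
  | Sum.inr (Sum.inl ⟨ℓ, χ⟩), x => ∑ g, cg χ.1 g * (lam x (Sum.inl ℓ) g : ℂ)
  | Sum.inr (Sum.inr ⟨ℓ, a, χ⟩), x => ∑ g, cg χ g * TT (Sum.inl ℓ) (Sum.inr a) (F ℓ) x g

lemma conj_cg {s : ℕ} (t g : Fin s → ZMod p) :
    (starRingEnd ℂ) (cg t g) = ZMod.stdAddChar (-∑ i, t i * g i) := conj_stdAddChar _

lemma phi_act (H : ∀ ℓ, Finset (Fin (e (Sum.inl ℓ)) → ZMod p))
    (F : ∀ ℓ : Fin (m + 1), (Fin (n (Sum.inl ℓ) + 1) → ℝ) → Fin d → ℝ) (j : JJ p h e H)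
    (x : EE p e n) (γ : (Σ k, Fin (e k)) → ZMod p) :
    phi H F j (actE γ x) = ZMod.stdAddChar (∑ i, chi H j i * γ i) * phi H F j x := by
  rcases j with (⟨b, a⟩ | ⟨b, a⟩) | (⟨ℓ, χ⟩ | ⟨ℓ, a, χ⟩)
  · simp only [phi, chi, uu_act, Pi.sub_apply, sub_mul, Finset.sum_sub_distrib, map_mul, conj_cg]
    rw [sub_eq_add_neg, AddChar.map_add_eq_mul, stdAddChar_sc, sc_pair, Finset.mul_sum]
    exact Finset.sum_congr rfl fun j _ => by ring
  · simp only [phi, chi, uu_act, Pi.add_apply, add_mul, Finset.sum_add_distrib]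
    rw [AddChar.map_add_eq_mul, stdAddChar_sc, stdAddChar_sc, Finset.mul_sum]
    exact Finset.sum_congr rfl fun j _ => by ring
  · simp only [phi, chi]
    rw [stdAddChar_sc]
    exact cg_sum_shift χ.1 (gr γ (Sum.inl ℓ)) fun g => (lam x (Sum.inl ℓ) g : ℂ)
  · simp only [phi, chi, Pi.add_apply, add_mul, Finset.sum_add_distrib, TT_act]
    rw [AddChar.map_add_eq_mul, stdAddChar_sc, stdAddChar_sc, mul_assoc,
      ← cg_sum_shift χ (gr γ (Sum.inl ℓ)) fun g => TT (Sum.inl ℓ) (Sum.inr a) (F ℓ) x g,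
      Finset.mul_sum]
    exact Finset.sum_congr rfl fun j _ => by ring

lemma phi_continuousOn (H : ∀ ℓ, Finset (Fin (e (Sum.inl ℓ)) → ZMod p))
    (F : ∀ ℓ : Fin (m + 1), (Fin (n (Sum.inl ℓ) + 1) → ℝ) → Fin d → ℝ)
    (hF : ∀ ℓ j, ContinuousOn (fun y => F ℓ y j) {y | ∀ c, 0 ≤ y c}) (j : JJ p h e H) :
    ContinuousOn (phi H F j) (PP p e n) := by
  have hu := fun k j => uu_continuous (p := p) (e := e) (n := n) k j
  rcases j with (⟨b, a⟩ | ⟨b, a⟩) | (⟨ℓ, χ⟩ | ⟨ℓ, a, χ⟩)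
  · unfold phi
    exact (continuous_finsetSum _ fun j _ =>
      (hu _ _).mul (Complex.continuous_conj.comp (hu _ _))).continuousOn
  · unfold phi
    exact (continuous_finsetSum _ fun j _ => (hu _ _).mul (hu _ _)).continuousOn
  · unfold phi lam
    exact Continuous.continuousOn (by fun_prop)
  · unfold phi
    exact continuousOn_finsetSum _ fun g _ =>
      continuousOn_const.mul (TT_continuousOn _ _ _ (hF ℓ) g)

lemma phi_real (hp : p = 2) (H : ∀ ℓ, Finset (Fin (e (Sum.inl ℓ)) → ZMod p))
    (F : ∀ ℓ : Fin (m + 1), (Fin (n (Sum.inl ℓ) + 1) → ℝ) → Fin d → ℝ) (j : JJ p h e H)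
    (x : EE p e n) : (phi H F j x).im = 0 := by
  refine im_of_mem ?_
  rcases j with (⟨b, a⟩ | ⟨b, a⟩) | (⟨ℓ, χ⟩ | ⟨ℓ, a, χ⟩)
  · refine sum_mem fun j _ => mul_mem (uu_real hp _ _ _) ?_
    rw [conj_of_mem (uu_real hp _ _ _)]
    exact uu_real hp _ _ _
  · exact sum_mem fun j _ => mul_mem (uu_real hp _ _ _) (uu_real hp _ _ _)
  · exact sum_mem fun g _ => mul_mem (cg_real hp _ _) (ofReal_mem _)
  · exact sum_mem fun g _ => mul_mem (cg_real hp _ _) (TT_real hp _ _ _ _ _)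

/-- The test maps have a common zero, at which the frame vectors are orthogonal to each other and
to all image points, and all group elements carry the same weight. -/
theorem exists_zero (he1 : ∀ a, e (Sum.inr a) = 1)
    (hn1 : ∀ ℓ, (p ^ e (Sum.inl ℓ) - 1) * (1 + qq p * h) ≤ n (Sum.inl ℓ))
    (hn2 : ∀ a : Fin h, n (Sum.inr a) = qq p * (m + qq p * (a + 1)))
    (F : ∀ ℓ : Fin (m + 1), (Fin (n (Sum.inl ℓ) + 1) → ℝ) → Fin d → ℝ)
    (hF : ∀ ℓ j, ContinuousOn (fun y => F ℓ y j) {y | ∀ c, 0 ≤ y c}) :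
    ∃ x ∈ PP p e n, (∀ ℓ g, lam x (Sum.inl ℓ) g = ((p : ℝ) ^ e (Sum.inl ℓ))⁻¹) ∧
      (∀ ℓ a g, TT (Sum.inl ℓ) (Sum.inr a) (F ℓ) x g = 0) ∧
      (∀ a b, a ≠ b → ∑ j ∈ Finset.range (d + 1),
        uu x (Sum.inr b) j * (starRingEnd ℂ) (uu x (Sum.inr a) j) = 0) ∧
      (p ≠ 2 → ∀ a b, ∑ j ∈ Finset.range (d + 1),
        uu x (Sum.inr b) j * uu x (Sum.inr a) j = 0) := by
  classical
  choose H hH0 hHneg hHcard using fun ℓ : Fin (m + 1) => half_exists (p := p) (e (Sum.inl ℓ))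
  choose ld hld0 hld using lead_exists he1 H hH0
  obtain ⟨x, hx, hz⟩ := borsuk_ulam_joins (n := n) (chi H) (fun j => ⟨ldk H j, ld j⟩) (rk h e)
    hld0 hld (fun k => count_le H hHcard hn1 hn2 k) (phi H F) (phi_continuousOn H F hF)
    (fun j x _ g => phi_act H F j x g) (fun hp j x _ => phi_real hp H F j x)
  refine ⟨x, hx, fun ℓ g => ?_, fun ℓ a g => ?_, ?_, ?_⟩
  · refine weights_const (H ℓ) (hHneg ℓ) (fun g => lam x (Sum.inl ℓ) g) ?_ ?_ g
    · unfold lam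
      rw [Finset.sum_comm]
      exact hx.2.1 _
    · intro χ hχ
      exact hz (Sum.inr (Sum.inl ⟨ℓ, χ, hχ⟩))
  · exact fourier_eq_zero (fun g => TT (Sum.inl ℓ) (Sum.inr a) (F ℓ) x g)
      (fun χ => hz (Sum.inr (Sum.inr ⟨ℓ, a, χ⟩))) g
  · have key : ∀ a b : Fin h, a < b → ∑ j ∈ Finset.range (d + 1),
        uu x (Sum.inr b) j * (starRingEnd ℂ) (uu x (Sum.inr a) j) = 0 := fun a b hab =>
      hz (Sum.inl (Sum.inl ⟨b, ⟨a, hab⟩⟩))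
    intro a b hab
    rcases lt_or_gt_of_ne hab with h1 | h1
    · exact key a b h1
    · have := congrArg (starRingEnd ℂ) (key b a h1)
      rw [map_zero, map_sum] at this
      rw [← this]
      exact Finset.sum_congr rfl fun j _ => by rw [map_mul, Complex.conj_conj, mul_comm]
  · intro hp
    have hq : qq p = 2 := by simp [qq, hp]
    have key : ∀ a b : Fin h, a ≤ b → ∑ j ∈ Finset.range (d + 1),
        uu x (Sum.inr b) j * uu x (Sum.inr a) j = 0 := fun a b hab =>
      hz (Sum.inl (Sum.inr ⟨b, ⟨a, by
        have : (a : ℕ) ≤ b := hab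
        rw [hq]; omega⟩⟩))
    intro a b
    rcases le_total a b with h1 | h1
    · exact key a b h1
    · rw [← key b a h1]
      exact Finset.sum_congr rfl fun j _ => mul_comm _ _

end Zero

section Core
variable {p : ℕ} [Fact p.Prime]

/-- The conclusion of the transversal Tverberg theorem. -/
def Concl (m d p : ℕ) (e : Fin (m + 1) → ℕ) (N : Fin (m + 1) → ℕ)
    (f : ∀ ℓ : Fin (m + 1), EuclideanSpace ℝ (Fin (N ℓ + 1)) → EuclideanSpace ℝ (Fin d)) : Prop :=
  ∃ L : AffineSubspace ℝ (EuclideanSpace ℝ (Fin d)),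
    (L : Set (EuclideanSpace ℝ (Fin d))).Nonempty ∧
    Module.finrank ℝ L.direction = m ∧
    ∀ ℓ : Fin (m + 1), ∃ σ : Fin (p ^ e ℓ) → Finset (Fin (N ℓ + 1)),
      (∀ j, (σ j).Nonempty) ∧
      (∀ j j', j ≠ j' → Disjoint (σ j) (σ j')) ∧
      (∀ j, (f ℓ '' simpFace (N ℓ) (σ j) ∩ (L : Set (EuclideanSpace ℝ (Fin d)))).Nonempty)

/-- Nonzero vectors that are pairwise orthogonal for the hermitian form, and orthogonal to all
(including themselves) for the bilinear form, have linearly independent real and imaginary parts. So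
the real linear system they define has full rank. -/
lemma frame_surj_complex {h d : ℕ} (u : Fin h → ℕ → ℂ) (hu : ∀ a, ∃ j ≤ d, u a j ≠ 0)
    (h1 : ∀ a b, a ≠ b → ∑ j ∈ Finset.range (d + 1), u b j * (starRingEnd ℂ) (u a j) = 0)
    (h2 : ∀ a b, ∑ j ∈ Finset.range (d + 1), u b j * u a j = 0) (b : Fin h) (w : ℂ) :
    ∃ (y : Fin d → ℝ) (y₀ : ℝ), ∀ a, ∑ j : Fin d, y j • u a j + y₀ • u a d = if a = b then w else 0 := by
  let S : ℝ := ∑ j ∈ Finset.range (d + 1), Complex.normSq (u b j)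
  have hS : S ≠ 0 := by
    obtain ⟨j, hj, hne⟩ := hu b
    refine (Finset.sum_pos' (fun j _ => Complex.normSq_nonneg _)
      ⟨j, Finset.mem_range.2 (by omega), Complex.normSq_pos.2 hne⟩).ne'
  let c : ℂ := 2 * w / S
  -- pairing a real part with `u a` produces the hermitian and the bilinear product with `u b`
  let Y : ℕ → ℝ := fun j => (c * (starRingEnd ℂ) (u b j)).re
  refine ⟨fun j => Y j, Y d, fun a => ?_⟩
  have e1 : ∑ j : Fin d, Y j • u a j + Y d • u a d = ∑ j ∈ Finset.range (d + 1), (Y j : ℂ) * u a j := by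
    rw [Finset.sum_range_succ, Finset.sum_range fun j => (Y j : ℂ) * u a j]
    simp only [Complex.real_smul]
  rw [e1]
  have e2 : ∀ j, (Y j : ℂ) * u a j = c / 2 * (u a j * (starRingEnd ℂ) (u b j)) +
      (starRingEnd ℂ) c / 2 * (u a j * u b j) := by
    intro j
    have : (Y j : ℂ) = (c * (starRingEnd ℂ) (u b j) + (starRingEnd ℂ) c * u b j) / 2 := by
      have := Complex.re_eq_add_conj (c * (starRingEnd ℂ) (u b j))
      rw [map_mul, Complex.conj_conj] at this
      exact this
    rw [this]; ring
  simp only [e2, Finset.sum_add_distrib, ← Finset.mul_sum, h2, mul_zero, add_zero]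
  split_ifs with hab
  · subst hab
    have : ∑ j ∈ Finset.range (d + 1), u a j * (starRingEnd ℂ) (u a j) = (S : ℂ) := by
      simp only [Complex.mul_conj, S, Complex.ofReal_sum]
    rw [this]
    have : (S : ℂ) ≠ 0 := by exact_mod_cast hS
    simp only [c]
    field_simp
  · rw [h1 b a (Ne.symm hab), mul_zero]

/-- The real version of `frame_surj_complex`, used for `p = 2`. -/
lemma frame_surj_real {h d : ℕ} (u : Fin h → ℕ → ℝ) (hu : ∀ a, ∃ j ≤ d, u a j ≠ 0)
    (h1 : ∀ a b, a ≠ b → ∑ j ∈ Finset.range (d + 1), u b j * u a j = 0) (b : Fin h) (w : ℝ) :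
    ∃ (y : Fin d → ℝ) (y₀ : ℝ), ∀ a, ∑ j : Fin d, y j • u a j + y₀ • u a d = if a = b then w else 0 := by
  let S : ℝ := ∑ j ∈ Finset.range (d + 1), u b j * u b j
  have hS : S ≠ 0 := by
    obtain ⟨j, hj, hne⟩ := hu b
    refine (Finset.sum_pos' (fun j _ => mul_self_nonneg _)
      ⟨j, Finset.mem_range.2 (by omega), mul_self_pos.2 hne⟩).ne'
  let Y : ℕ → ℝ := fun j => w / S * u b j
  refine ⟨fun j => Y j, Y d, fun a => ?_⟩
  have e1 : ∑ j : Fin d, Y j • u a j + Y d • u a d = ∑ j ∈ Finset.range (d + 1), Y j * u a j := by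
    rw [Finset.sum_range_succ, Finset.sum_range fun j => Y j * u a j]
    simp only [smul_eq_mul]
  rw [e1]
  simp only [Y, mul_assoc, ← Finset.mul_sum]
  split_ifs with hab
  · subst hab
    exact div_mul_cancel₀ w hS
  · rw [h1 a b hab, mul_zero]

/-- The theorem when the codimension `d - m` is a multiple of `qq p`. -/
theorem core {m h d : ℕ} (hd : d = m + qq p * h) (e N : Fin (m + 1) → ℕ)
    (hN : ∀ ℓ, N ℓ = (p ^ e ℓ - 1) * (1 + qq p * h))
    (f : ∀ ℓ : Fin (m + 1), EuclideanSpace ℝ (Fin (N ℓ + 1)) → EuclideanSpace ℝ (Fin d))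
    (hf : ∀ ℓ, ContinuousOn (f ℓ) (stdSimp (N ℓ))) : Concl m d p e N f := by
  classical
  obtain ⟨x, hx, hlam, hT, hherm, hbil⟩ := exists_zero (p := p) (d := d)
    (e := Sum.elim e fun _ => 1) (n := Sum.elim N fun a : Fin h => qq p * (m + qq p * (a + 1)))
    (fun _ => rfl) (fun ℓ => (hN ℓ).ge) (fun _ => rfl) (fun ℓ => hom (f ℓ))
    (fun ℓ j => hom_continuousOn (hf ℓ) j)
  let Y : ∀ ℓ : Fin (m + 1), (Fin (e ℓ) → ZMod p) → Fin (N ℓ + 1) → ℝ := fun ℓ g c =>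
    x (Sum.inl ℓ) c g
  have hY0 : ∀ ℓ g c, 0 ≤ Y ℓ g c := fun ℓ g c => hx.1 (Sum.inl ℓ) c g
  have hYs : ∀ ℓ g, ∑ c, Y ℓ g c = ((p : ℝ) ^ e ℓ)⁻¹ := fun ℓ g => hlam ℓ g
  have hp0 : ∀ ℓ, ((p : ℝ) ^ e ℓ)⁻¹ ≠ 0 := fun ℓ =>
    inv_ne_zero (pow_ne_zero _ (by exact_mod_cast (Fact.out : p.Prime).ne_zero))
  have hYs0 : ∀ ℓ g, ∑ c, Y ℓ g c ≠ 0 := fun ℓ g => by rw [hYs]; exact hp0 ℓ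
  have hYd : ∀ ℓ g g' c, g ≠ g' → Y ℓ g c * Y ℓ g' c = 0 := fun ℓ g g' c hg =>
    hx.2.2 (Sum.inl ℓ) c g g' hg
  let u : Fin h → ℕ → ℂ := fun a j => uu x (Sum.inr a) j
  have hu : ∀ a, ∃ j ≤ d, u a j ≠ 0 := by
    intro a
    obtain ⟨j, hj, hne⟩ := uu_ne_zero x hx (Sum.inr a)
    refine ⟨j, hj.trans ?_, hne⟩
    simp only [Sum.elim_inr]
    rw [Nat.mul_div_cancel_left _ (qq_pos p), hd]
    exact Nat.add_le_add_left (Nat.mul_le_mul_left _ a.2) _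
  -- the normalized weights of `g` are a point of the simplex
  let pt : ∀ ℓ : Fin (m + 1), (Fin (e ℓ) → ZMod p) → EuclideanSpace ℝ (Fin (N ℓ + 1)) :=
    fun ℓ g => WithLp.toLp 2 ((∑ c, Y ℓ g c)⁻¹ • Y ℓ g)
  have hpt : ∀ ℓ g a, ∑ j : Fin d, (f ℓ (pt ℓ g) j) • u a j + u a d = 0 := by
    intro ℓ g a
    have h1 : ∑ j : Fin d, u a j * (hom (f ℓ) (Y ℓ g) j : ℂ) +
      u a d * ((∑ c, Y ℓ g c : ℝ) : ℂ) = 0 := hT ℓ a g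
    have h2 : ((∑ c, Y ℓ g c : ℝ) : ℂ) ≠ 0 := by exact_mod_cast hYs0 ℓ g
    refine mul_left_cancel₀ h2 ?_
    rw [mul_zero, ← h1, mul_add, Finset.mul_sum]
    congr 1
    · refine Finset.sum_congr rfl fun j _ => ?_
      rw [hom, Complex.ofReal_mul, Complex.real_smul]
      ring
    · ring
  have hptmem : ∀ ℓ g, pt ℓ g ∈ stdSimp (N ℓ) := fun ℓ g => normalize_mem (hY0 ℓ g) (hYs0 ℓ g)
  obtain ⟨L, hL1, hL2, hL3⟩ : ∃ L : AffineSubspace ℝ (EuclideanSpace ℝ (Fin d)),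
      (L : Set (EuclideanSpace ℝ (Fin d))).Nonempty ∧
      Module.finrank ℝ L.direction = m ∧ ∀ ℓ g, f ℓ (pt ℓ g) ∈ L := by
    by_cases hp : p = 2
    · have hq : qq p = 1 := by simp [qq, hp]
      have hre : ∀ a j, u a j = ((u a j).re : ℂ) := fun a j => by
        have := im_of_mem (uu_real hp x (Sum.inr a) j)
        exact Complex.ext rfl (by rw [Complex.ofReal_im]; exact this)
      have hpt' : ∀ ℓ g a, ∑ j : Fin d, (f ℓ (pt ℓ g) j) • (u a j).re + (u a d).re = 0 := by
        intro ℓ g a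
        have := congrArg Complex.re (hpt ℓ g a)
        simpa using this
      obtain ⟨L, h1, h2, h3⟩ := exists_flat (W := ℝ) (fun a (j : Fin d) => (u a j).re)
        (fun a => (u a d).re)
        (frame_surj_real (fun a j => (u a j).re)
          (fun a => (hu a).imp fun j hj => ⟨hj.1, fun h0 => hj.2 (by rw [hre, h0]; rfl)⟩)
          (fun a b hab => by
            have := hherm a b hab
            have h4 : ∀ j, uu x (Sum.inr b) j * (starRingEnd ℂ) (uu x (Sum.inr a) j) =
                (((u b j).re * (u a j).re : ℝ) : ℂ) := by
              intro j
              rw [Complex.ofReal_mul, ← hre, ← hre, conj_of_mem (uu_real hp _ _ _)]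
            simp only [h4] at this
            exact_mod_cast this))
        (f 0 (pt 0 0)) (hpt' 0 0)
      refine ⟨L, h1, ?_, fun ℓ g => h3 _ (hpt' ℓ g)⟩
      rw [h2, Module.finrank_self, hd, hq]
      omega
    · have hq : qq p = 2 := by simp [qq, hp]
      obtain ⟨L, h1, h2, h3⟩ := exists_flat (W := ℂ) (fun a (j : Fin d) => u a j)
        (fun a => u a d) (frame_surj_complex u hu hherm (hbil hp)) (f 0 (pt 0 0)) (hpt 0 0)
      refine ⟨L, h1, ?_, fun ℓ g => h3 _ (hpt ℓ g)⟩
      rw [h2, Complex.finrank_real_complex, hd, hq]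
      omega
  refine ⟨L, hL1, hL2, fun ℓ => ?_⟩
  let E : Fin (p ^ e ℓ) ≃ (Fin (e ℓ) → ZMod p) := (Fintype.equivFinOfCardEq (by simp)).symm
  have hmem : ∀ g, ∀ i, pt ℓ g i ≠ 0 → Y ℓ g i ≠ 0 := by
    intro g i hi h0
    apply hi
    simp [pt, h0]
  refine ⟨fun j => Finset.univ.filter fun c => Y ℓ (E j) c ≠ 0, fun j => ?_, fun j j' hj => ?_,
    fun j => ⟨f ℓ (pt ℓ (E j)), ⟨pt ℓ (E j), ⟨hptmem ℓ _, fun i hi => ?_⟩, rfl⟩, hL3 ℓ _⟩⟩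
  · obtain ⟨c, -, hc⟩ := Finset.exists_ne_zero_of_sum_ne_zero (hYs0 ℓ (E j))
    exact ⟨c, by simpa using hc⟩
  · rw [Finset.disjoint_left]
    intro c h1 h2
    simp only [Finset.mem_filter, Finset.mem_univ, true_and] at h1 h2
    exact mul_ne_zero h1 h2 (hYd ℓ _ _ c fun h => hj (E.injective h))
  · simpa using hmem _ i hi

end Core

/-! ### The reduction for m = 0 -/

section Reduction

/-- Sends the additional vertices of the larger simplex to the vertex `0`. -/
def fold (N t : ℕ) (i : Fin (N + t + 1)) : Fin (N + 1) :=
  if hi : (i : ℕ) < N + 1 then ⟨i, hi⟩ else 0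

/-- The affine retraction of the larger simplex onto the smaller one. -/
def ret (N t : ℕ) (x : EuclideanSpace ℝ (Fin (N + t + 1))) : EuclideanSpace ℝ (Fin (N + 1)) :=
  WithLp.toLp 2 fun c => ∑ i, if fold N t i = c then x i else 0

/-- The total weight of the additional vertices. -/
def extra (N t : ℕ) (x : EuclideanSpace ℝ (Fin (N + t + 1))) : ℝ :=
  ∑ i : Fin (N + t + 1), if (i : ℕ) < N + 1 then 0 else x i

/-- The map of the larger simplex into one more dimension whose last coordinate is the weight of the
additional vertices, the other coordinates being `f` composed with the retraction. -/
def ext {N d : ℕ} (t : ℕ) (f : EuclideanSpace ℝ (Fin (N + 1)) → EuclideanSpace ℝ (Fin d))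
    (x : EuclideanSpace ℝ (Fin (N + t + 1))) : EuclideanSpace ℝ (Fin (d + 1)) :=
  WithLp.toLp 2 (Fin.lastCases (extra N t x) fun j => f (ret N t x) j)

lemma ret_mem {N t : ℕ} {x : EuclideanSpace ℝ (Fin (N + t + 1))} (hx : x ∈ stdSimp (N + t)) :
    ret N t x ∈ stdSimp N := by
  refine ⟨fun c => ?_, ?_⟩
  · simp only [ret]
    refine Finset.sum_nonneg fun i _ => ?_
    split_ifs
    · exact hx.1 i
    · exact le_rfl
  · simp only [ret]
    rw [Finset.sum_comm, ← hx.2]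
    exact Finset.sum_congr rfl fun i _ => by simp

lemma ext_continuousOn {N d : ℕ} (t : ℕ)
    {f : EuclideanSpace ℝ (Fin (N + 1)) → EuclideanSpace ℝ (Fin d)}
    (hf : ContinuousOn f (stdSimp N)) : ContinuousOn (ext t f) (stdSimp (N + t)) := by
  refine (PiLp.continuous_toLp 2 _).comp_continuousOn (continuousOn_pi.2 fun j => ?_)
  have hr : Continuous (ret N t) := by
    refine (PiLp.continuous_toLp 2 _).comp (continuous_pi fun c => ?_)
    refine continuous_finsetSum _ fun i _ => ?_
    split_ifs <;> fun_prop
  refine Fin.lastCases ?_ (fun j => ?_) j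
  · simp only [Fin.lastCases_last]
    refine Continuous.continuousOn (continuous_finsetSum _ fun i _ => ?_)
    split_ifs <;> fun_prop
  · simp only [Fin.lastCases_castSucc]
    have h1 : Continuous fun z : EuclideanSpace ℝ (Fin d) => z j := by fun_prop
    exact h1.comp_continuousOn (hf.comp hr.continuousOn fun x hx => ret_mem hx)

/-- For `m = 0` the theorem follows from its version in one dimension more. With `r - 1` additional
vertices, one of `r` disjoint faces avoids them all, so the common point has last coordinate `0`;
hence no additional vertex carries weight, and the faces can be restricted to the original simplex.
-/
lemma reduce {d p : ℕ} (hp : p.Prime) (e N : Fin (0 + 1) → ℕ)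
    (f : ∀ ℓ : Fin (0 + 1), EuclideanSpace ℝ (Fin (N ℓ + 1)) → EuclideanSpace ℝ (Fin d))
    (hC : Concl 0 (d + 1) p e (fun ℓ => N ℓ + (p ^ e ℓ - 1)) (fun ℓ => ext (p ^ e ℓ - 1) (f ℓ))) :
    Concl 0 d p e N f := by
  classical
  obtain ⟨L, -, hL, hσ⟩ := hC
  obtain ⟨σ, -, hdis, hpt⟩ := hσ 0
  have hone : ∀ a ∈ L, ∀ b ∈ L, a = b := by
    intro a ha b hb
    have h1 := AffineSubspace.vsub_mem_direction ha hb
    rw [Submodule.finrank_eq_zero.1 hL, Submodule.mem_bot, vsub_eq_zero_iff_eq] at h1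
    exact h1
  choose y hy hyL using hpt
  choose x hx hxy using hy
  have hxL : ∀ j, ext (p ^ e 0 - 1) (f 0) (x j) ∈ L := fun j => by
    have := hyL j
    rwa [← hxy j] at this
  have hr : 0 < p ^ e 0 := pow_pos hp.pos _
  -- one of the faces contains no additional vertex, since there are too few of them
  obtain ⟨j₀, hj₀⟩ : ∃ j₀, ∀ i ∈ σ j₀, (i : ℕ) < N 0 + 1 := by
    by_contra! hcon
    choose i hi hiN using hcon
    have hlt : ∀ j, (i j : ℕ) < N 0 + (p ^ e 0 - 1) + 1 := fun j => (i j).2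
    have hcard := Fintype.card_le_of_injective
      (fun j => (⟨(i j : ℕ) - (N 0 + 1), by have := hlt j; have := hiN j; omega⟩ :
        Fin (p ^ e 0 - 1)))
      (fun j j' h => by
        by_contra hne
        have h1 : i j = i j' := by
          have h2 := congrArg Fin.val h
          have := hiN j
          have := hiN j'
          simp only at h2
          exact Fin.ext (by omega)
        exact Finset.disjoint_left.1 (hdis j j' hne) (hi j) (h1 ▸ hi j'))
    simp only [Fintype.card_fin] at hcard
    omega
  have hlast : ∀ j, ext (p ^ e 0 - 1) (f 0) (x j) (Fin.last d) = extra (N 0) (p ^ e 0 - 1) (x j) := by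
    intro j; simp [ext]
  have hw0 : extra (N 0) (p ^ e 0 - 1) (x j₀) = 0 := by
    refine Finset.sum_eq_zero fun i _ => ?_
    split_ifs with h
    · rfl
    · by_contra hne
      exact h (hj₀ i ((hx j₀).2 i hne))
  have hw : ∀ j, extra (N 0) (p ^ e 0 - 1) (x j) = 0 := fun j => by
    rw [← hlast, hone _ (hxL j) _ (hxL j₀), hlast, hw0]
  have hold : ∀ j i, x j i ≠ 0 → (i : ℕ) < N 0 + 1 := by
    intro j i hi
    by_contra hlt
    have h1 := (Finset.sum_eq_zero_iff_of_nonneg (fun i _ => by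
      split_ifs
      · exact le_rfl
      · exact (hx j).1.1 i)).1 (hw j) i (Finset.mem_univ _)
    rw [if_neg hlt] at h1
    exact hi h1
  have hf : ∀ j j', f 0 (ret _ _ (x j)) = f 0 (ret _ _ (x j')) := by
    intro j j'
    have h1 := hone _ (hxL j) _ (hxL j')
    ext k
    have h2 := congrArg (fun z : EuclideanSpace ℝ (Fin (d + 1)) => z k.castSucc) h1
    simpa [ext] using h2
  let j₁ : Fin (p ^ e 0) := ⟨0, hr⟩
  refine ⟨AffineSubspace.mk' (f 0 (ret _ _ (x j₁))) ⊥, ⟨_, AffineSubspace.self_mem_mk' _ _⟩, ?_, ?_⟩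
  · rw [AffineSubspace.direction_mk', finrank_bot]
  intro ℓ
  obtain rfl : ℓ = 0 := by omega
  have hsupp : ∀ j c, ret (N 0) (p ^ e 0 - 1) (x j) c ≠ 0 →
      (⟨c, by omega⟩ : Fin (N 0 + (p ^ e 0 - 1) + 1)) ∈ σ j := by
    intro j c hc
    have hc' : ∑ i, (if fold (N 0) (p ^ e 0 - 1) i = c then x j i else 0) ≠ 0 := hc
    obtain ⟨i, -, hi⟩ := Finset.exists_ne_zero_of_sum_ne_zero hc'
    rw [ne_eq, ite_eq_right_iff, not_forall] at hi
    obtain ⟨hfold, hi⟩ := hi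
    have hlt := hold j i hi
    rw [fold, dif_pos hlt] at hfold
    subst hfold
    exact (hx j).2 i hi
  refine ⟨fun j => Finset.univ.filter fun c : Fin (N 0 + 1) =>
    (⟨c, by omega⟩ : Fin (N 0 + (p ^ e 0 - 1) + 1)) ∈ σ j, fun j => ?_, fun j j' hj => ?_, fun j =>
    ⟨_, ⟨ret _ _ (x j), ⟨ret_mem (hx j).1, fun c hc => ?_⟩, rfl⟩, ?_⟩⟩
  · obtain ⟨c, -, hc⟩ := Finset.exists_ne_zero_of_sum_ne_zero
      (show ∑ c, ret _ _ (x j) c ≠ 0 by rw [(ret_mem (hx j).1).2]; exact one_ne_zero)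
    exact ⟨c, by simpa using hsupp j c hc⟩
  · rw [Finset.disjoint_left]
    intro c h1 h2
    simp only [Finset.mem_filter, Finset.mem_univ, true_and] at h1 h2
    exact Finset.disjoint_left.1 (hdis j j' hj) h1 h2
  · simpa using hsupp j c hc
  · rw [hf j j₁]
    exact AffineSubspace.self_mem_mk' _ _

end Reduction

end TTverberg

open TTverberg in
/-- The topological transversal Tverberg theorem for prime powers. -/
theorem topological_transversal_tverberg_prime_powers
    (m d p : ℕ) (hp : p.Prime) (hmd : m < d)
    (e : Fin (m + 1) → ℕ)
    (heven : Even (p * (d - m)) ∨ m = 0)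
    (N : Fin (m + 1) → ℕ) (hN : ∀ ℓ, N ℓ = (p ^ e ℓ - 1) * (d + 1 - m))
    (f : ∀ ℓ : Fin (m + 1), EuclideanSpace ℝ (Fin (N ℓ + 1)) → EuclideanSpace ℝ (Fin d))
    (hf : ∀ ℓ, ContinuousOn (f ℓ) (stdSimp (N ℓ))) :
    ∃ L : AffineSubspace ℝ (EuclideanSpace ℝ (Fin d)),
      (L : Set (EuclideanSpace ℝ (Fin d))).Nonempty ∧
      Module.finrank ℝ L.direction = m ∧
      ∀ ℓ : Fin (m + 1), ∃ σ : Fin (p ^ e ℓ) → Finset (Fin (N ℓ + 1)),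
        (∀ j, (σ j).Nonempty) ∧
        (∀ j j', j ≠ j' → Disjoint (σ j) (σ j')) ∧
        (∀ j, (f ℓ '' simpFace (N ℓ) (σ j) ∩ (L : Set (EuclideanSpace ℝ (Fin d)))).Nonempty) := by
  have : Fact p.Prime := ⟨hp⟩
  have main : ∀ h, d - m = qq p * h → Concl m d p e N f := fun h hh =>
    core (h := h) (by omega) e N (fun ℓ => by rw [hN, ← hh]; congr 1; omega) f hf
  by_cases hp2 : p = 2
  · exact main (d - m) (by simp [qq, hp2])
  have hq : qq p = 2 := by simp [qq, hp2]
  rcases Nat.even_or_odd (d - m) with hk | hk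
  · obtain ⟨h, hh⟩ := hk
    exact main h (by rw [hq]; omega)
  -- `p` and `d - m` are odd, which leaves the case `m = 0`
  have hm : m = 0 := heven.resolve_left
    (Nat.not_even_iff_odd.2 ((hp.odd_of_ne_two hp2).mul hk))
  subst hm
  obtain ⟨h, hh⟩ := hk
  refine reduce hp e N f (core (h := h + 1) (by rw [hq]; omega) e _ (fun ℓ => ?_) _
    fun ℓ => ext_continuousOn _ (hf ℓ))
  simp only [hN, hq]
  rw [show d + 1 - 0 = 2 * h + 2 by omega]
  ring
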